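/- arXiv:2411.11316 — 2 statements merged into one kernel-verified Lean document; each statement's English description precedes it below -/
import Mathlib

section
/- Let P ∈ ℝ[x] be a polynomial whose coefficient of x is non-Liouville. Fix ε ∈ (0,1) and A > 0, set c = 1/(2(A+1)) and z = X^{c/log log X}. Then there exist μ ∈ (0,1) and a constant C₁ > 0 such that for all sufficiently large X, 0 ≤ S(X,z) − S(X) ≤ C₁·( X/(log z)^{1−ε} + X/(log z)^{εμ} + X/(log X)^A ). -/
open Real Finset

/-- `α` is Liouville: for every `n ∈ ℕ` there are integers `p, q` with `q > 1`
and `|α - p/q| ≤ q^(-n)`. -/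
def IsLiouvilleNumber (α : ℝ) : Prop :=
  ∀ n : ℕ, ∃ p q : ℤ, 1 < q ∧ |α - (p : ℝ) / (q : ℝ)| ≤ (q : ℝ) ^ (-(n : ℤ))

open Classical in
/-- The finset of primes `p < z`. -/
noncomputable def primesLt (z : ℝ) : Finset ℕ :=
  (Finset.range ⌈z⌉₊).filter fun p => p.Prime ∧ (p : ℝ) < z

/-- `P_z`, the product of all primes `p < z`. -/
noncomputable def Pz (z : ℝ) : ℕ := ∏ p ∈ primesLt z, p

open Classical in
/-- `S(X)`: the number of naturals `1 ≤ x ≤ X` with `gcd(x, ⌊P(x)⌋) = 1`. -/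
noncomputable def S (P : Polynomial ℝ) (X : ℝ) : ℕ :=
  ((Finset.Icc 1 ⌊X⌋₊).filter fun x => Int.gcd (x : ℤ) ⌊P.eval (x : ℝ)⌋ = 1).card

open Classical in
/-- `A_d(X)`: the set of naturals `1 ≤ x ≤ X` with `d ∣ x` and `d ∣ ⌊P(x)⌋`. -/
noncomputable def AP (P : Polynomial ℝ) (d : ℕ) (X : ℝ) : Finset ℕ :=
  (Finset.Icc 1 ⌊X⌋₊).filter fun x => (d : ℤ) ∣ (x : ℤ) ∧ (d : ℤ) ∣ ⌊P.eval (x : ℝ)⌋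

open Classical in
/-- `S(X, z)`: the number of naturals `1 ≤ x ≤ X` with `gcd(gcd(x, ⌊P(x)⌋), P_z) = 1`. -/
noncomputable def S2 (P : Polynomial ℝ) (X z : ℝ) : ℕ :=
  ((Finset.Icc 1 ⌊X⌋₊).filter fun x =>
    Nat.gcd (Int.gcd (x : ℤ) ⌊P.eval (x : ℝ)⌋) (Pz z) = 1).card

/-- `z = X ^ (c / log log X)` with `c = 1/(2(A+1))`. -/
noncomputable def zf (A X : ℝ) : ℝ := X ^ ((1 / (2 * (A + 1))) / Real.log (Real.log X))


/-- `x` is within `e` of an integer. -/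
def NearInt (x e : ℝ) : Prop := ∃ a : ℤ, |x - a| ≤ e

lemma NearInt.sub {x y e e' : ℝ} (h : NearInt x e) (h' : NearInt y e') :
    NearInt (x - y) (e + e') := by
  obtain ⟨a, ha⟩ := h
  obtain ⟨b, hb⟩ := h'
  refine ⟨a - b, ?_⟩
  push_cast
  rw [abs_le] at *
  constructor <;> linarith [ha.1, ha.2, hb.1, hb.2]

lemma NearInt.mono {x e e' : ℝ} (h : NearInt x e) (h' : e ≤ e') : NearInt x e' := by
  obtain ⟨a, ha⟩ := h
  exact ⟨a, ha.trans h'⟩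

lemma NearInt.nat_mul {x e : ℝ} (h : NearInt x e) (n : ℕ) : NearInt (n * x) (n * e) := by
  obtain ⟨a, ha⟩ := h
  refine ⟨n * a, ?_⟩
  push_cast
  rw [← mul_sub, abs_mul, Nat.abs_cast]
  gcongr

/-- Overlapping translates. -/
lemma exists_diff (S : Finset ℕ) (N J s : ℕ) (hS : S ⊆ Finset.Icc 1 N)
    (h : N + J * s < (J + 1) * S.card) :
    ∃ i, 1 ≤ i ∧ i ≤ J ∧ ∃ a ∈ S, ∃ b ∈ S, a = b + i * s := by
  have hmap : ∀ x ∈ S ×ˢ Finset.range (J + 1), x.1 + x.2 * s ∈ Finset.Icc 1 (N + J * s) := by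
    intro x hx
    rw [Finset.mem_product, Finset.mem_range] at hx
    have h1 := Finset.mem_Icc.1 (hS hx.1)
    have h2 : x.2 * s ≤ J * s := Nat.mul_le_mul_right _ (by omega)
    rw [Finset.mem_Icc]
    omega
  obtain ⟨x, hx, y, hy, hne, he⟩ := Finset.exists_ne_map_eq_of_card_lt_of_maps_to
    (s := S ×ˢ Finset.range (J + 1)) (t := Finset.Icc 1 (N + J * s))
    (by rw [Finset.card_product, Finset.card_range, Nat.card_Icc]; rw [mul_comm S.card]; omega) hmap
  have key : ∀ x ∈ S ×ˢ Finset.range (J + 1), ∀ y ∈ S ×ˢ Finset.range (J + 1),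
      x.1 + x.2 * s = y.1 + y.2 * s → x.2 < y.2 →
      ∃ i, 1 ≤ i ∧ i ≤ J ∧ ∃ a ∈ S, ∃ b ∈ S, a = b + i * s := by
    intro x hx y hy he hlt
    rw [Finset.mem_product, Finset.mem_range] at hx hy
    refine ⟨y.2 - x.2, by omega, by omega, x.1, hx.1, y.1, hy.1, ?_⟩
    obtain ⟨d, hd⟩ := Nat.exists_eq_add_of_lt hlt
    rw [hd] at he ⊢
    have : x.2 + d + 1 - x.2 = d + 1 := by omega
    rw [this]
    nlinarith
  rcases lt_trichotomy x.2 y.2 with h1 | h1 | h1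
  · exact key x hx y hy he h1
  · exfalso
    apply hne
    ext
    · rw [h1] at he; omega
    · exact h1
  · exact key y hy x hx he.symm h1

/-- Vinogradov's lemma. -/
lemma vino (θ ε : ℝ) (hε : 0 ≤ ε) (D N : ℕ) (hD : 2 ≤ D) (S : Finset ℕ)
    (hS : S ⊆ Finset.Icc 1 N) (hcard : N ≤ D * S.card)
    (hnear : ∀ m ∈ S, NearInt (θ * m) ε) (hεD : ε * D ^ 6 ≤ 1) (hN : D ^ 6 ≤ N) :
    ∃ q : ℕ, 1 ≤ q ∧ q ≤ D ^ 6 ∧ NearInt (q * θ) (ε * D ^ 6 / N) := by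
  have h5 : 2 ^ 5 ≤ D ^ 5 := Nat.pow_le_pow_left hD 5
  have h4 : 2 ^ 4 ≤ D ^ 4 := Nat.pow_le_pow_left hD 4
  have hD6 : 32 * D ≤ D ^ 6 := by rw [pow_succ]; exact Nat.mul_le_mul_right _ (by omega)
  have hNpos : 0 < N := by omega
  have hSpos : 0 < S.card := by
    rcases Nat.eq_zero_or_pos S.card with h | h
    · rw [h] at hcard; omega
    · exact h
  have diff : ∀ a ∈ S, ∀ b ∈ S, NearInt (θ * a - θ * b) (2 * ε) := by
    intro a ha b hb
    rw [two_mul]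
    exact (hnear a ha).sub (hnear b hb)
  obtain ⟨q, hq1, hq2, a, ha, b, hb, hab⟩ := exists_diff S N (2 * D) 1 hS (by nlinarith)
  obtain ⟨c, hc⟩ := diff a ha b hb
  have hqθ : θ * a - θ * b = q * θ := by rw [hab]; push_cast; ring
  rw [hqθ] at hc
  refine ⟨q, hq1, by omega, c, ?_⟩
  set β : ℝ := q * θ - c with hβ
  by_contra hlt
  push Not at hlt
  have hNr : (0 : ℝ) < N := by exact_mod_cast hNpos
  have hDr : (2 : ℝ) ≤ D := by exact_mod_cast hD
  have hβpos : 0 < |β| := lt_of_le_of_lt (by positivity) hlt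
  set T : ℕ := ⌊2 * ε / |β|⌋₊ + 1 with hT
  have hT1 : 2 * ε < T * |β| := by
    have := Nat.lt_floor_add_one (2 * ε / |β|)
    rw [div_lt_iff₀ hβpos] at this
    rw [hT]; push_cast; exact this
  have hT2 : T * |β| ≤ 4 * ε := by
    have := Nat.floor_le (a := 2 * ε / |β|) (by positivity)
    rw [le_div_iff₀ hβpos] at this
    rw [hT]; push_cast; linarith
  have hlt' : ε * D ^ 6 < |β| * N := by rwa [div_lt_iff₀ hNr] at hlt
  have hq2r : (q : ℝ) ≤ 2 * D := by exact_mod_cast hq2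
  have hD4r : (16 : ℝ) ≤ D ^ 4 := by exact_mod_cast h4
  have hD6r : (32 : ℝ) * D ≤ D ^ 6 := by exact_mod_cast hD6
  have hT3 : 2 * D * (q * T) ≤ N := by
    have : (2 * D * (q * T) : ℝ) ≤ N := by
      have h1 : (2 * D * (q * T) : ℝ) * |β| ≤ N * |β| := by
        calc (2 * D * (q * T) : ℝ) * |β| = 2 * D * q * (T * |β|) := by ring
          _ ≤ 2 * D * (2 * D) * (4 * ε) := by gcongr
          _ = 16 * D ^ 2 * ε := by ring
          _ ≤ D ^ 4 * D ^ 2 * ε := by gcongr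
          _ = ε * D ^ 6 := by ring
          _ ≤ N * |β| := by linarith
      exact le_of_mul_le_mul_right h1 hβpos
    exact_mod_cast this
  obtain ⟨i, hi1, hi2, a', ha', b', hb', hab'⟩ :=
    exists_diff S N (2 * D) (q * T) hS (by nlinarith)
  obtain ⟨e, he⟩ := diff a' ha' b' hb'
  have hx : θ * a' - θ * b' = i * T * β + ((i * T * c : ℤ) : ℝ) := by
    rw [hab', hβ]; push_cast; ring
  rw [hx] at he
  have hi1r : (1 : ℝ) ≤ i := by exact_mod_cast hi1
  have hi2r : (i : ℝ) ≤ 2 * D := by exact_mod_cast hi2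
  have habs : |i * T * β| = i * (T * |β|) := by
    rw [abs_mul, abs_mul, Nat.abs_cast, Nat.abs_cast, mul_assoc]
  have hlow : 2 * ε < |i * T * β| := by
    rw [habs]
    have : 0 ≤ T * |β| := by positivity
    nlinarith
  have hup : |i * T * β| ≤ 1 / 4 := by
    rw [habs]
    calc (i : ℝ) * (T * |β|) ≤ 2 * D * (4 * ε) := by gcongr
      _ = ε * (32 * D) / 4 := by ring
      _ ≤ ε * D ^ 6 / 4 := by gcongr
      _ ≤ 1 / 4 := by linarith
  have hε4 : 2 * ε < 1 / 4 := lt_of_lt_of_le hlow hup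
  set k : ℤ := e - i * T * c with hk
  have he' : |i * T * β - (k : ℝ)| ≤ 2 * ε := by
    rw [hk]; push_cast; push_cast at he
    convert he using 2
    ring
  have hk0 : k = 0 := by
    have h1 : |(k : ℝ)| < 1 := by
      rw [abs_le] at he' hup
      rw [abs_lt]
      constructor <;> linarith [he'.1, he'.2, hup.1, hup.2]
    have h2 : |k| < 1 := by exact_mod_cast h1
    exact Int.abs_lt_one_iff.1 h2
  rw [hk0] at he'
  simp only [Int.cast_zero, sub_zero] at he'
  linarith

/-- Many differences are popular. -/
lemma popular (S : Finset ℕ) (D N : ℕ) (hD : 2 ≤ D) (hN : 2 * D ≤ N)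
    (hS : S ⊆ Finset.Icc 1 N) (hcard : N ≤ D * S.card) :
    N ≤ (8 * D ^ 2) * ((Finset.Icc 1 N).filter fun h =>
      N ≤ (8 * D ^ 2) * (S.filter fun m => m + h ∈ S).card).card := by
  classical
  set H := (Finset.Icc 1 N).filter fun h =>
      N ≤ (8 * D ^ 2) * (S.filter fun m => m + h ∈ S).card with hH
  have hS2 : 2 ≤ S.card := by nlinarith
  have hSN : S.card ≤ N := by simpa using Finset.card_le_card hS
  -- count pairs
  set A := (S ×ˢ S).filter fun x => x.1 < x.2 with hA
  have hA2 : 2 * A.card = S.card * S.card - S.card := by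
    have h1 : S.offDiag = A ∪ (S ×ˢ S).filter fun x => x.2 < x.1 := by
      ext x
      simp only [hA, Finset.mem_offDiag, Finset.mem_union, Finset.mem_filter, Finset.mem_product]
      constructor
      · rintro ⟨h1, h2, h3⟩
        rcases lt_or_gt_of_ne h3 with h | h <;> tauto
      · rintro (⟨⟨h1, h2⟩, h3⟩ | ⟨⟨h1, h2⟩, h3⟩)
        · exact ⟨h1, h2, h3.ne⟩
        · exact ⟨h1, h2, h3.ne'⟩
    have h2 : ((S ×ˢ S).filter fun x => x.2 < x.1).card = A.card := by
      refine Finset.card_nbij' Prod.swap Prod.swap ?_ ?_ ?_ ?_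
      · intro x hx; simp [hA] at hx ⊢; tauto
      · intro x hx; simp [hA] at hx ⊢; tauto
      · intro x _; simp
      · intro x _; simp
    rw [← Finset.offDiag_card, h1, Finset.card_union_of_disjoint, h2, two_mul]
    rw [Finset.disjoint_left]
    intro x hx hx'
    simp only [hA, Finset.mem_filter] at hx hx'
    omega
  have hAsum : A.card = ∑ h ∈ Finset.Icc 1 N, (S.filter fun m => m + h ∈ S).card := by
    rw [Finset.card_eq_sum_card_fiberwise (f := fun x => x.2 - x.1) (t := Finset.Icc 1 N)]
    · apply Finset.sum_congr rfl
      intro h hh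
      rw [Finset.mem_Icc] at hh
      refine Finset.card_nbij' (fun x => x.1) (fun m => (m, m + h)) ?_ ?_ ?_ ?_
      · intro x hx
        simp [hA] at hx ⊢
        have : x.1 + h = x.2 := by omega
        rw [this]; tauto
      · intro m hm
        simp [hA] at hm ⊢
        exact ⟨hm, by omega⟩
      · intro x hx
        simp [hA] at hx ⊢
        ext
        · rfl
        · simp; omega
      · intro m _; rfl
    · intro x hx
      simp [hA] at hx ⊢
      have := Finset.mem_Icc.1 (hS hx.1.1)
      have := Finset.mem_Icc.1 (hS hx.1.2)
      omega
  have hterm : ∀ h ∈ Finset.Icc 1 N, (8 * D ^ 2) * (S.filter fun m => m + h ∈ S).card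
      ≤ N + (if h ∈ H then (8 * D ^ 2) * N else 0) := by
    intro h hh
    by_cases hm : h ∈ H
    · rw [if_pos hm]
      have : (S.filter fun m => m + h ∈ S).card ≤ N := (Finset.card_filter_le _ _).trans hSN
      nlinarith
    · rw [if_neg hm]
      simp only [hH, Finset.mem_filter, not_and, not_le] at hm
      have := hm hh
      omega
  have hsum := Finset.sum_le_sum hterm
  rw [← Finset.mul_sum, ← hAsum, Finset.sum_add_distrib, Finset.sum_const, Nat.card_Icc,
    ← Finset.sum_filter, Finset.sum_const, Finset.filter_mem_eq_inter,
    Finset.inter_eq_right.2 (Finset.filter_subset _ _)] at hsum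
  simp only [smul_eq_mul, Nat.add_sub_cancel, ← hH] at hsum
  have hA3 : S.card * S.card ≤ 4 * A.card := by
    have : S.card ≤ S.card * S.card := by nlinarith
    have h3 : 2 * S.card ≤ S.card * S.card := by nlinarith
    omega
  have hNN : N * N ≤ D ^ 2 * (S.card * S.card) := by nlinarith
  have h8 : 2 * (N * N) ≤ 8 * D ^ 2 * A.card := by nlinarith
  have hNpos : 0 < N := by omega
  have : N * N ≤ (8 * D ^ 2 * H.card) * N := by nlinarith
  exact Nat.le_of_mul_le_mul_right this hNpos

lemma pigeon (H : Finset ℕ) (M : ℕ) (hM : 1 ≤ M) (g : ℕ → ℕ)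
    (hg : ∀ h ∈ H, g h ∈ Finset.Icc 1 M) :
    ∃ q ∈ Finset.Icc 1 M, H.card ≤ M * (H.filter fun h => g h = q).card := by
  by_contra hcon
  push Not at hcon
  have h1 := Finset.card_eq_sum_card_fiberwise (s := H) (t := Finset.Icc 1 M) (f := g) hg
  have h2 : ∑ q ∈ Finset.Icc 1 M, M * (H.filter fun h => g h = q).card
      < ∑ q ∈ Finset.Icc 1 M, H.card :=
    Finset.sum_lt_sum_of_nonempty ⟨1, Finset.mem_Icc.2 ⟨le_rfl, hM⟩⟩ hcon
  rw [← Finset.mul_sum, ← h1, Finset.sum_const, Nat.card_Icc] at h2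
  simp at h2

lemma diff_coeff (f : Polynomial ℝ) (k : ℕ) (hf : f.natDegree ≤ k + 1) (h : ℝ) :
    (Polynomial.taylor h f - f).natDegree ≤ k ∧
    (Polynomial.taylor h f - f).coeff k = (k + 1) * h * f.coeff (k + 1) := by
  constructor
  · rw [Polynomial.natDegree_le_iff_coeff_eq_zero]
    intro n hn
    rw [Polynomial.coeff_sub, Polynomial.taylor_coeff]
    have hdeg : (Polynomial.hasseDeriv n f).natDegree < 1 := by
      have := Polynomial.natDegree_hasseDeriv_le f n
      omega
    rw [Polynomial.eval_eq_sum_range' hdeg]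
    simp [Polynomial.hasseDeriv_coeff]
  · rw [Polynomial.coeff_sub, Polynomial.taylor_coeff]
    have hdeg : (Polynomial.hasseDeriv k f).natDegree < 2 := by
      have := Polynomial.natDegree_hasseDeriv_le f k
      omega
    rw [Polynomial.eval_eq_sum_range' hdeg]
    simp [Polynomial.hasseDeriv_coeff, Finset.sum_range_succ, add_comm 1 k]
    ring

lemma top_coeff (k : ℕ) : ∃ C : ℕ, ∀ f : Polynomial ℝ, f.natDegree ≤ k → ∀ D N : ℕ, 2 ≤ D →
    ∀ ε : ℝ, 0 ≤ ε → ε * D ^ C ≤ 1 → D ^ C ≤ N → ∀ S : Finset ℕ, S ⊆ Finset.Icc 1 N →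
    N ≤ D * S.card → (∀ m ∈ S, NearInt (f.eval (m : ℝ)) ε) →
    ∃ q : ℕ, 1 ≤ q ∧ q ≤ D ^ C ∧ NearInt (q * f.coeff k) (ε * D ^ C / N ^ k) := by
  induction k with
  | zero =>
    refine ⟨0, ?_⟩
    intro f hf D N hD ε hε _ hN S hS hcard hnear
    have hne : S.Nonempty := by
      rw [← Finset.card_pos]
      rcases Nat.eq_zero_or_pos S.card with h | h
      · rw [h] at hcard; simp at hN; omega
      · exact h
    obtain ⟨m, hm⟩ := hne
    refine ⟨1, le_rfl, by simp, ?_⟩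
    have := hnear m hm
    rw [Polynomial.eq_C_of_natDegree_le_zero hf] at this
    simpa using this
  | succ k ih =>
    obtain ⟨C, hC⟩ := ih
    refine ⟨30 * (C + 1) + 5 * C + k + 2, ?_⟩
    intro f hf D N hD ε hε hεD hN S hS hcard hnear
    classical
    set E := 30 * (C + 1) + 5 * C + k + 2 with hE
    have hD1 : 1 ≤ D := by omega
    have hDr : (2 : ℝ) ≤ D := by exact_mod_cast hD
    have hDr1 : (1 : ℝ) ≤ D := by linarith
    have hD3 : 8 ≤ D ^ 3 := by simpa using Nat.pow_le_pow_left hD 3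
    set D' := 8 * D ^ 2 with hD'
    have hD'5 : D' ≤ D ^ 5 := by
      calc D' ≤ D ^ 3 * D ^ 2 := Nat.mul_le_mul_right _ hD3
        _ = D ^ 5 := by ring
    have hD'2 : 2 ≤ D' := by nlinarith
    have hD'C : D' ^ C ≤ D ^ (5 * C) := by
      calc D' ^ C ≤ (D ^ 5) ^ C := Nat.pow_le_pow_left hD'5 C
        _ = D ^ (5 * C) := by rw [pow_mul]
    set D'' := D' ^ (C + 1) with hD''
    have hD''2 : 2 ≤ D'' := le_trans hD'2 (Nat.le_self_pow (by omega) _)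
    have hD''6 : D'' ^ 6 ≤ D ^ (30 * (C + 1)) := by
      calc D'' ^ 6 = D' ^ (6 * (C + 1)) := by rw [hD'', ← pow_mul]; ring_nf
        _ ≤ (D ^ 5) ^ (6 * (C + 1)) := Nat.pow_le_pow_left hD'5 _
        _ = D ^ (30 * (C + 1)) := by rw [← pow_mul]; ring_nf
    have hD'Cr : ((D' : ℕ) : ℝ) ^ C ≤ (D : ℝ) ^ (5 * C) := by exact_mod_cast hD'C
    have hD''6r : ((D'' : ℕ) : ℝ) ^ 6 ≤ (D : ℝ) ^ (30 * (C + 1)) := by exact_mod_cast hD''6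
    have hDN : 2 * D ≤ N := by
      calc 2 * D ≤ D ^ 2 := by nlinarith
        _ ≤ D ^ E := Nat.pow_le_pow_right hD1 (by omega)
        _ ≤ N := hN
    have hNr : (1 : ℝ) ≤ N := by
      have : 1 ≤ N := by omega
      exact_mod_cast this
    have hpop := popular S D N hD hDN hS hcard
    rw [← hD'] at hpop
    set H := (Finset.Icc 1 N).filter fun h =>
      N ≤ D' * (S.filter fun m => m + h ∈ S).card with hH
    have hstep : ∀ h ∈ H, ∃ q : ℕ, 1 ≤ q ∧ q ≤ D' ^ C ∧
        NearInt (q * ((k + 1) * h * f.coeff (k + 1))) ((2 * ε) * D' ^ C / N ^ k) := by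
      intro h hh
      rw [hH, Finset.mem_filter] at hh
      obtain ⟨hd1, hd2⟩ := diff_coeff f k hf h
      rw [← hd2]
      refine hC _ hd1 D' N hD'2 (2 * ε) (by positivity) ?_ ?_
        (S.filter fun m => m + h ∈ S) ((Finset.filter_subset _ _).trans hS) hh.2 ?_
      · calc 2 * ε * (D' : ℝ) ^ C ≤ D * ε * D ^ (5 * C) := by gcongr
          _ = ε * D ^ (5 * C + 1) := by ring
          _ ≤ ε * D ^ E := by gcongr <;> first | assumption | omega
          _ ≤ 1 := hεD
      · exact hD'C.trans ((Nat.pow_le_pow_right hD1 (by omega)).trans hN)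
      · intro m hm
        rw [Finset.mem_filter] at hm
        have h1 := (hnear _ hm.2).sub (hnear _ hm.1)
        rw [two_mul, Polynomial.eval_sub, Polynomial.taylor_eval]
        convert h1 using 2
        push_cast
        rfl
    choose! g hg1 hg2 hg3 using hstep
    obtain ⟨q, hq, hqH⟩ := pigeon H (D' ^ C) (Nat.one_le_pow _ _ (by omega)) g
      (fun h hh => Finset.mem_Icc.2 ⟨hg1 h hh, hg2 h hh⟩)
    rw [Finset.mem_Icc] at hq
    set ε' : ℝ := (2 * ε) * D' ^ C / N ^ k with hε'
    have hε'le : ε' ≤ ε * D ^ (5 * C + 1) := by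
      rw [hε']
      calc 2 * ε * (D' : ℝ) ^ C / N ^ k ≤ 2 * ε * (D' : ℝ) ^ C :=
            div_le_self (by positivity) (one_le_pow₀ hNr)
        _ ≤ D * ε * D ^ (5 * C) := by gcongr
        _ = ε * D ^ (5 * C + 1) := by ring
    obtain ⟨q', hq'1, hq'2, hq'3⟩ := vino (q * ((k + 1) * f.coeff (k + 1))) ε' (by positivity) D'' N
      hD''2 (H.filter fun h => g h = q)
      ((Finset.filter_subset _ _).trans (Finset.filter_subset _ _))
      (by
        calc N ≤ D' * H.card := hpop
          _ ≤ D' * (D' ^ C * (H.filter fun h => g h = q).card) := Nat.mul_le_mul_left _ hqH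
          _ = D'' * (H.filter fun h => g h = q).card := by rw [hD'']; ring)
      (by
        intro h hh
        rw [Finset.mem_filter] at hh
        have := hg3 h hh.1
        rw [hh.2] at this
        convert this using 1
        ring)
      (by
        calc ε' * (D'' : ℝ) ^ 6 ≤ (ε * D ^ (5 * C + 1)) * D ^ (30 * (C + 1)) := by gcongr
          _ = ε * D ^ (5 * C + 1 + 30 * (C + 1)) := by ring
          _ ≤ ε * D ^ E := by gcongr <;> first | assumption | omega
          _ ≤ 1 := hεD)
      (hD''6.trans ((Nat.pow_le_pow_right hD1 (by omega)).trans hN))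
    refine ⟨q' * q * (k + 1), ?_, ?_, ?_⟩
    · have : 0 < q' * q * (k + 1) := by
        have := hq.1
        positivity
      omega
    · have hk : k + 1 ≤ D ^ (k + 1) := (Nat.lt_pow_self (by omega)).le
      calc q' * q * (k + 1) ≤ D ^ (30 * (C + 1)) * D ^ (5 * C) * D ^ (k + 1) :=
            Nat.mul_le_mul (Nat.mul_le_mul (hq'2.trans hD''6) (hq.2.trans hD'C)) hk
        _ = D ^ (30 * (C + 1) + 5 * C + (k + 1)) := by ring
        _ ≤ D ^ E := Nat.pow_le_pow_right hD1 (by omega)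
    · have : ((q' * q * (k + 1) : ℕ) : ℝ) * f.coeff (k + 1)
          = q' * (q * ((k + 1) * f.coeff (k + 1))) := by push_cast; ring
      rw [this]
      apply hq'3.mono
      rw [hε']
      calc 2 * ε * (D' : ℝ) ^ C / N ^ k * (D'' : ℝ) ^ 6 / N
          = 2 * ε * (D' : ℝ) ^ C * (D'' : ℝ) ^ 6 / N ^ (k + 1) := by
            rw [div_mul_eq_mul_div, div_div, ← pow_succ]
        _ ≤ D * ε * D ^ (5 * C) * D ^ (30 * (C + 1)) / N ^ (k + 1) := by gcongr
        _ = ε * D ^ (5 * C + 1 + 30 * (C + 1)) / N ^ (k + 1) := by ring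
        _ ≤ ε * D ^ E / N ^ (k + 1) := by gcongr <;> first | assumption | omega

lemma lin_coeff (k : ℕ) : ∃ C : ℕ, ∀ f : Polynomial ℝ, f.natDegree ≤ k → ∀ D N : ℕ, 2 ≤ D →
    ∀ ε : ℝ, 0 ≤ ε → ε * D ^ C ≤ 1 → D ^ C ≤ N → ∀ S : Finset ℕ, S ⊆ Finset.Icc 1 N →
    N ≤ D * S.card → (∀ m ∈ S, NearInt (f.eval (m : ℝ)) ε) →
    ∃ q : ℕ, 1 ≤ q ∧ q ≤ D ^ C ∧ NearInt (q * f.coeff 1) (ε * D ^ C / N) := by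
  induction k with
  | zero =>
    refine ⟨0, ?_⟩
    intro f hf D N hD ε hε _ hN S hS hcard hnear
    refine ⟨1, le_rfl, by simp, 0, ?_⟩
    rw [Polynomial.coeff_eq_zero_of_natDegree_lt (by omega)]
    simp
    positivity
  | succ k ih =>
    rcases Nat.eq_zero_or_pos k with hk | hk
    · subst hk
      simpa using top_coeff 1
    obtain ⟨C, hC⟩ := ih
    obtain ⟨T, hT⟩ := top_coeff (k + 1)
    refine ⟨C + T + 1, ?_⟩
    intro f hf D N hD ε hε hεD hN S hS hcard hnear
    have hD1 : 1 ≤ D := by omega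
    have hDr : (2 : ℝ) ≤ D := by exact_mod_cast hD
    have hDr1 : (1 : ℝ) ≤ D := by linarith
    have hNpos : 1 ≤ N := le_trans (Nat.one_le_pow _ _ hD1) hN
    have hNr : (1 : ℝ) ≤ N := by exact_mod_cast hNpos
    obtain ⟨q, hq1, hq2, a, ha⟩ := hT f hf D N hD ε hε
      (le_trans (by gcongr <;> first | assumption | omega) hεD)
      ((Nat.pow_le_pow_right hD1 (by omega)).trans hN) S hS hcard hnear
    have hq2r : (q : ℝ) ≤ (D : ℝ) ^ T := by exact_mod_cast hq2
    set b := f.coeff (k + 1) with hb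
    set g : Polynomial ℝ := Polynomial.C (q : ℝ) * (f - Polynomial.monomial (k + 1) b) with hg
    have hgdeg : g.natDegree ≤ k := by
      rw [Polynomial.natDegree_le_iff_coeff_eq_zero]
      intro n hn
      rw [hg, Polynomial.coeff_C_mul, Polynomial.coeff_sub, Polynomial.coeff_monomial]
      split_ifs with h
      · rw [← h, ← hb]; ring
      · rw [Polynomial.coeff_eq_zero_of_natDegree_lt (by omega)]; ring
    have hgc : g.coeff 1 = q * f.coeff 1 := by
      rw [hg, Polynomial.coeff_C_mul, Polynomial.coeff_sub, Polynomial.coeff_monomial,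
        if_neg (by omega), sub_zero]
    set ε' : ℝ := ε * D ^ (T + 1) with hε'
    have hgnear : ∀ m ∈ S, NearInt (g.eval (m : ℝ)) ε' := by
      intro m hm
      have h1 := (hnear m hm).nat_mul q
      have h2 : NearInt (q * b * (m : ℝ) ^ (k + 1)) (ε * D ^ T) := by
        refine ⟨a * m ^ (k + 1), ?_⟩
        have hmN : (m : ℝ) ≤ N := by exact_mod_cast (Finset.mem_Icc.1 (hS hm)).2
        push_cast
        rw [← sub_mul, abs_mul, abs_of_nonneg (by positivity : (0 : ℝ) ≤ (m : ℝ) ^ (k + 1))]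
        calc |q * b - a| * (m : ℝ) ^ (k + 1) ≤ (ε * D ^ T / N ^ (k + 1)) * N ^ (k + 1) := by
              gcongr
          _ = ε * D ^ T := by field_simp
      have h3 := h1.sub h2
      have h4 : g.eval (m : ℝ) = q * f.eval (m : ℝ) - q * b * (m : ℝ) ^ (k + 1) := by
        rw [hg]; simp; ring
      rw [h4]
      apply h3.mono
      calc (q : ℝ) * ε + ε * D ^ T ≤ D ^ T * ε + ε * D ^ T := by gcongr
        _ = 2 * (ε * D ^ T) := by ring
        _ ≤ D * (ε * D ^ T) := by gcongr
        _ = ε' := by rw [hε']; ring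
    obtain ⟨q', hq'1, hq'2, hq'3⟩ := hC g hgdeg D N hD ε' (by positivity)
      (by rw [hε']; convert hεD using 1; ring)
      ((Nat.pow_le_pow_right hD1 (by omega)).trans hN) S hS hcard hgnear
    refine ⟨q' * q, Nat.mul_pos hq'1 hq1, ?_, ?_⟩
    · calc q' * q ≤ D ^ C * D ^ T := Nat.mul_le_mul hq'2 hq2
        _ = D ^ (C + T) := by rw [pow_add]
        _ ≤ _ := Nat.pow_le_pow_right hD1 (by omega)
    · rw [hgc] at hq'3
      convert hq'3 using 1
      · push_cast; ring
      · rw [hε']; ring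

lemma main_count (P : Polynomial ℝ) (hP : ¬ IsLiouvilleNumber (P.coeff 1)) :
    ∃ C : ℕ, ∀ D N p : ℕ, 2 ≤ D → D ^ C ≤ N → D ^ C ≤ p →
      D * ((Finset.Icc 1 N).filter fun m : ℕ =>
        (p : ℤ) ∣ ⌊P.eval ((p * m : ℕ) : ℝ)⌋).card < N := by
  unfold IsLiouvilleNumber at hP
  push Not at hP
  obtain ⟨n, hn⟩ := hP
  obtain ⟨C, hC⟩ := lin_coeff P.natDegree
  refine ⟨C + (C + 1) * n, ?_⟩
  intro D N p hD hN hp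
  by_contra hcon
  push Not at hcon
  have hD1 : 1 ≤ D := by omega
  have hpC : D ^ C ≤ p := (Nat.pow_le_pow_right hD1 (by omega)).trans hp
  have hNC : D ^ C ≤ N := (Nat.pow_le_pow_right hD1 (by omega)).trans hN
  have hNn : D ^ ((C + 1) * n) ≤ N := (Nat.pow_le_pow_right hD1 (by omega)).trans hN
  have hp1 : 1 ≤ p := (Nat.one_le_pow _ _ hD1).trans hpC
  have hN1 : 1 ≤ N := (Nat.one_le_pow _ _ hD1).trans hNC
  have hpr : (0 : ℝ) < p := by exact_mod_cast hp1
  have hNr : (0 : ℝ) < N := by exact_mod_cast hN1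
  have hpCr : (D : ℝ) ^ C ≤ p := by exact_mod_cast hpC
  set f : Polynomial ℝ := Polynomial.C (1 / (p : ℝ)) *
    P.comp (Polynomial.C (p : ℝ) * Polynomial.X) with hf
  have hle : 1 / (p : ℝ) * D ^ C ≤ 1 := by
    rw [one_div, inv_mul_le_iff₀ hpr]; linarith
  have hdeg : f.natDegree ≤ P.natDegree := by
    rw [Polynomial.natDegree_le_iff_coeff_eq_zero]
    intro m hm
    rw [hf, Polynomial.coeff_C_mul, Polynomial.comp_C_mul_X_coeff,
      Polynomial.coeff_eq_zero_of_natDegree_lt hm]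
    ring
  have hcoeff : f.coeff 1 = P.coeff 1 := by
    rw [hf, Polynomial.coeff_C_mul, Polynomial.comp_C_mul_X_coeff]
    field_simp
  obtain ⟨q, hq1, hq2, a, ha⟩ := hC f hdeg D N hD (1 / p) (by positivity) hle hNC _
    (Finset.filter_subset _ _) hcon (by
      intro m hm
      rw [Finset.mem_filter] at hm
      obtain ⟨t, ht⟩ := hm.2
      refine ⟨t, ?_⟩
      have h1 := Int.floor_le (P.eval ((p * m : ℕ) : ℝ))
      have h2 := Int.lt_floor_add_one (P.eval ((p * m : ℕ) : ℝ))
      rw [ht] at h1 h2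
      push_cast at h1 h2
      have h3 : f.eval (m : ℝ) - t = (P.eval ((p : ℝ) * m) - p * t) / p := by
        rw [hf]
        simp
        field_simp
      rw [h3, abs_div, abs_of_pos hpr]
      gcongr
      rw [abs_le]
      constructor <;> linarith)
  rw [hcoeff] at ha
  have hqr : (1 : ℝ) ≤ q := by exact_mod_cast hq1
  have hqpos : (0 : ℝ) < q := by linarith
  have ha2 : |(q : ℝ) * P.coeff 1 - a| ≤ 1 / N := ha.trans (by gcongr)
  have h4 := hn (2 * a) (2 * q) (by omega)
  have h5 : |P.coeff 1 - ((2 * a : ℤ) : ℝ) / ((2 * q : ℤ) : ℝ)| ≤ 1 / N := by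
    have : P.coeff 1 - ((2 * a : ℤ) : ℝ) / ((2 * q : ℤ) : ℝ) = (q * P.coeff 1 - a) / q := by
      push_cast; field_simp
    rw [this, abs_div, abs_of_pos hqpos]
    exact (div_le_self (abs_nonneg _) hqr).trans ha2
  have h6 := h4.trans_le h5
  rw [zpow_neg, zpow_natCast, one_div] at h6
  have h7 : (N : ℝ) < ((2 * q : ℤ) : ℝ) ^ n := by
    rwa [inv_lt_inv₀ (by push_cast; positivity) hNr] at h6
  have h8 : N < (2 * q) ^ n := by exact_mod_cast h7
  have h9 : (2 * q) ^ n ≤ D ^ ((C + 1) * n) := by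
    rw [pow_mul]
    apply Nat.pow_le_pow_left
    rw [pow_succ, mul_comm]
    exact Nat.mul_le_mul hq2 hD
  omega

lemma card_cast_filter (s : Finset ℕ) (p : ℤ → Prop) [DecidablePred p]
    [DecidablePred fun x : ℕ => p x] (t : Finset ℤ)
    (ht : ∀ y, y ∈ t ↔ ∃ x ∈ s, (x : ℤ) = y) :
    (t.filter p).card = (s.filter fun x : ℕ => p x).card := by
  rw [← Finset.card_image_of_injective (s.filter fun x : ℕ => p x)
    (Nat.cast_injective (R := ℤ))]
  congr 1
  ext y
  simp only [Finset.mem_filter, Finset.mem_image, ht]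
  constructor
  · rintro ⟨⟨x, hx, rfl⟩, hp⟩
    exact ⟨x, ⟨hx, hp⟩, rfl⟩
  · rintro ⟨x, ⟨hx, hp⟩, rfl⟩
    exact ⟨⟨x, hx, rfl⟩, hp⟩

lemma S_eq (P : Polynomial ℝ) (X : ℝ) : S P X = ((Finset.Icc 1 ⌊X⌋₊).filter fun x : ℕ =>
    Int.gcd (x : ℤ) ⌊P.eval (x : ℝ)⌋ = 1).card := by
  unfold S
  rw [card_cast_filter (Finset.Icc 1 ⌊X⌋₊)]
  · simp only [Int.cast_natCast]
  · intro y
    simp [eq_comm]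

lemma S2_eq (P : Polynomial ℝ) (X z : ℝ) : S2 P X z = ((Finset.Icc 1 ⌊X⌋₊).filter fun x : ℕ =>
    Nat.gcd (Int.gcd (x : ℤ) ⌊P.eval (x : ℝ)⌋) (Pz z) = 1).card := by
  unfold S2
  rw [card_cast_filter (Finset.Icc 1 ⌊X⌋₊)]
  · simp only [Int.cast_natCast]
  · intro y
    simp [eq_comm]

lemma S_le_S2 (P : Polynomial ℝ) (X z : ℝ) : S P X ≤ S2 P X z := by
  rw [S_eq, S2_eq]
  apply Finset.card_le_card
  intro x hx
  rw [Finset.mem_filter] at hx ⊢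
  exact ⟨hx.1, by rw [hx.2, Nat.gcd_one_left]⟩

lemma harm_bound (n : ℕ) : ∑ i ∈ Finset.Icc 1 n, (1 : ℝ) / i ≤ 1 + Real.log n := by
  have := harmonic_le_one_add_log n
  rw [harmonic_eq_sum_Icc] at this
  push_cast at this
  simpa only [one_div] using this

lemma S2_bound (P : Polynomial ℝ) (X z : ℝ) (D K : ℕ) (hX : 1 ≤ X) (hD : 2 ≤ D) (hK : 1 ≤ K)
    (hz : (K : ℝ) ≤ z)
    (hmain : ∀ N p : ℕ, K ≤ N → K ≤ p →
      D * ((Finset.Icc 1 N).filter fun m : ℕ =>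
        (p : ℤ) ∣ ⌊P.eval ((p * m : ℕ) : ℝ)⌋).card < N) :
    (S2 P X z : ℝ) - S P X ≤ X / D * (1 + Real.log X)
      + ∑ m ∈ Finset.Icc 1 K, (Nat.primeCounting ⌊X / m⌋₊ : ℝ) := by
  classical
  set M := ⌊X⌋₊ with hM
  have hM1 : 1 ≤ M := Nat.one_le_floor_iff _ |>.2 hX
  have hMX : (M : ℝ) ≤ X := Nat.floor_le (by linarith)
  set U : Finset ℕ := ((Finset.Icc 1 M).filter fun p => K ≤ p ∧ K ≤ M / p).biUnion fun p =>
    (((Finset.Icc 1 (M / p)).filter fun m : ℕ =>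
        (p : ℤ) ∣ ⌊P.eval ((p * m : ℕ) : ℝ)⌋).image fun m => p * m) with hU
  set V : Finset ℕ := (Finset.Icc 1 K).biUnion fun m =>
    ((Finset.range (M / m + 1)).filter Nat.Prime).image fun p => p * m with hV
  have hsub : S2 P X z ≤ S P X + (U.card + V.card) := by
    have : S2 P X z ≤ (((Finset.Icc 1 ⌊X⌋₊).filter fun x : ℕ =>
        Int.gcd (x : ℤ) ⌊P.eval (x : ℝ)⌋ = 1) ∪ (U ∪ V)).card := by
      rw [S2_eq]
      apply Finset.card_le_card
      intro x hx
      rw [Finset.mem_filter] at hx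
      obtain ⟨hx1, hx2⟩ := hx
      rw [Finset.mem_union, Finset.mem_union]
      by_cases hg : Int.gcd (x : ℤ) ⌊P.eval (x : ℝ)⌋ = 1
      · left; rw [Finset.mem_filter]; exact ⟨hx1, hg⟩
      right
      obtain ⟨p, hp, hpg⟩ := Nat.exists_prime_and_dvd hg
      have hpx : p ∣ x := by
        have := (Int.natCast_dvd_natCast.2 hpg).trans (Int.gcd_dvd_left _ _)
        exact_mod_cast this
      have hpf : (p : ℤ) ∣ ⌊P.eval (x : ℝ)⌋ :=
        (Int.natCast_dvd_natCast.2 hpg).trans (Int.gcd_dvd_right _ _)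
      have hpz : z ≤ p := by
        by_contra hlt
        push Not at hlt
        have hmem : p ∈ primesLt z := by
          unfold primesLt
          rw [Finset.mem_filter, Finset.mem_range]
          exact ⟨Nat.lt_ceil.2 hlt, hp, hlt⟩
        have hdvd : p ∣ Pz z := Finset.dvd_prod_of_mem _ hmem
        have := Nat.dvd_gcd hpg hdvd
        rw [hx2] at this
        exact hp.one_lt.ne' (Nat.dvd_one.1 this)
      have hKp : K ≤ p := by exact_mod_cast hz.trans hpz
      rw [Finset.mem_Icc, ← hM] at hx1
      obtain ⟨m, rfl⟩ := hpx
      have hp0 := hp.pos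
      have hm1 : 1 ≤ m := by
        rcases Nat.eq_zero_or_pos m with h | h
        · rw [h] at hx1; omega
        · exact h
      have hmM : m ≤ M / p := by
        rw [Nat.le_div_iff_mul_le hp0, mul_comm]; exact hx1.2
      have hpM : p ≤ M / m := by
        rw [Nat.le_div_iff_mul_le hm1]; exact hx1.2
      by_cases hc : K ≤ M / p
      · left
        rw [hU, Finset.mem_biUnion]
        refine ⟨p, ?_, ?_⟩
        · rw [Finset.mem_filter, Finset.mem_Icc]
          exact ⟨⟨hp0, hpM.trans (Nat.div_le_self _ _)⟩, hKp, hc⟩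
        · rw [Finset.mem_image]
          refine ⟨m, ?_, rfl⟩
          rw [Finset.mem_filter, Finset.mem_Icc]
          exact ⟨⟨hm1, hmM⟩, hpf⟩
      · right
        rw [hV, Finset.mem_biUnion]
        refine ⟨m, ?_, ?_⟩
        · rw [Finset.mem_Icc]; omega
        · rw [Finset.mem_image]
          refine ⟨p, ?_, rfl⟩
          rw [Finset.mem_filter, Finset.mem_range]
          exact ⟨by omega, hp⟩
    refine this.trans ((Finset.card_union_le _ _).trans ?_)
    refine Nat.add_le_add (le_of_eq ?_) (Finset.card_union_le _ _)
    rw [S_eq]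
  have hDr : (0 : ℝ) < D := by
    have : 0 < D := by omega
    exact_mod_cast this
  have hUc : (U.card : ℝ) ≤ X / D * (1 + Real.log X) := by
    have h1 : U.card ≤ ∑ p ∈ (Finset.Icc 1 M).filter fun p => K ≤ p ∧ K ≤ M / p,
        ((Finset.Icc 1 (M / p)).filter fun m : ℕ =>
          (p : ℤ) ∣ ⌊P.eval ((p * m : ℕ) : ℝ)⌋).card := by
      refine Finset.card_biUnion_le.trans (Finset.sum_le_sum fun p _ => Finset.card_image_le)
    have h1r : (U.card : ℝ) ≤ ∑ p ∈ (Finset.Icc 1 M).filter fun p => K ≤ p ∧ K ≤ M / p,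
        (((Finset.Icc 1 (M / p)).filter fun m : ℕ =>
          (p : ℤ) ∣ ⌊P.eval ((p * m : ℕ) : ℝ)⌋).card : ℝ) := by exact_mod_cast h1
    calc (U.card : ℝ) ≤ _ := h1r
      _ ≤ ∑ p ∈ (Finset.Icc 1 M).filter fun p => K ≤ p ∧ K ≤ M / p, X / D * (1 / p) := by
          apply Finset.sum_le_sum
          intro p hp
          rw [Finset.mem_filter, Finset.mem_Icc] at hp
          have h2 := (hmain (M / p) p hp.2.2 hp.2.1).le
          have h3 : (D : ℝ) * (((Finset.Icc 1 (M / p)).filter fun m : ℕ =>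
            (p : ℤ) ∣ ⌊P.eval ((p * m : ℕ) : ℝ)⌋).card : ℝ) ≤ ((M / p : ℕ) : ℝ) := by
            exact_mod_cast h2
          have h4 : ((M / p : ℕ) : ℝ) ≤ M / p := Nat.cast_div_le
          have h5 : (M : ℝ) / p ≤ X / p := by gcongr
          have h6 : X / D * (1 / p) = (X / p) / D := by
            rw [mul_one_div, div_right_comm]
          rw [h6, le_div_iff₀ hDr, mul_comm]
          linarith
      _ ≤ ∑ p ∈ Finset.Icc 1 M, X / D * (1 / p) := by
          apply Finset.sum_le_sum_of_subset_of_nonneg (Finset.filter_subset _ _)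
          intros
          positivity
      _ = X / D * ∑ p ∈ Finset.Icc 1 M, 1 / (p : ℝ) := by rw [Finset.mul_sum]
      _ ≤ X / D * (1 + Real.log M) := by gcongr; exact harm_bound M
      _ ≤ X / D * (1 + Real.log X) := by
          have : (0 : ℝ) < M := by exact_mod_cast hM1
          gcongr
  have hVc : (V.card : ℝ) ≤ ∑ m ∈ Finset.Icc 1 K, (Nat.primeCounting ⌊X / m⌋₊ : ℝ) := by
    have : V.card ≤ ∑ m ∈ Finset.Icc 1 K, Nat.primeCounting ⌊X / m⌋₊ := by
      refine Finset.card_biUnion_le.trans (Finset.sum_le_sum fun m _ => ?_)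
      refine Finset.card_image_le.trans (le_of_eq ?_)
      rw [Nat.floor_div_natCast, ← hM, Nat.primeCounting, Nat.primeCounting',
        Nat.count_eq_card_filter_range]
    exact_mod_cast this
  have : (S2 P X z : ℝ) ≤ S P X + (U.card + V.card) := by exact_mod_cast hsub
  linarith


lemma asym_L (C : ℕ) (c x₀ : ℝ) (hc : 0 < c) : ∀ᶠ L : ℝ in Filter.atTop,
    4 ≤ L ∧ 3 * C * (Real.log L) ^ 2 ≤ c * L ∧ 3 * C * Real.log L ≤ L / 2 ∧
    8 + 18 * C * Real.log L ≤ L ^ (1 / 2 : ℝ) ∧ c ≤ Real.log L ∧ x₀ ≤ Real.exp (L / 2) := by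
  have h1 : ∀ᶠ L : ℝ in Filter.atTop, 3 * C * (Real.log L) ^ 2 ≤ c * L := by
    have := (isLittleO_pow_log_id_atTop (n := 2)).bound (c := c / (3 * C + 1)) (by positivity)
    filter_upwards [this, Filter.eventually_ge_atTop 1] with L hL hL1
    rw [Real.norm_of_nonneg (by positivity), id, Real.norm_of_nonneg (by linarith)] at hL
    rw [div_mul_eq_mul_div, le_div_iff₀ (by positivity)] at hL
    nlinarith [sq_nonneg (Real.log L)]
  have h2 : ∀ᶠ L : ℝ in Filter.atTop, 3 * C * Real.log L ≤ L / 2 := by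
    have := (isLittleO_pow_log_id_atTop (n := 1)).bound (c := (1 / 2) / (3 * C + 1)) (by positivity)
    filter_upwards [this, Filter.eventually_ge_atTop 1] with L hL hL1
    have hl := Real.log_nonneg hL1
    rw [pow_one, Real.norm_of_nonneg hl, id, Real.norm_of_nonneg (by linarith)] at hL
    rw [div_mul_eq_mul_div, le_div_iff₀ (by positivity)] at hL
    nlinarith
  have h3 : ∀ᶠ L : ℝ in Filter.atTop, 18 * C * Real.log L ≤ L ^ (1 / 2 : ℝ) / 2 := by
    have := (isLittleO_log_rpow_atTop (r := 1 / 2) (by norm_num)).bound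
      (c := (1 / 2) / (18 * C + 1)) (by positivity)
    filter_upwards [this, Filter.eventually_ge_atTop 1] with L hL hL1
    have hl := Real.log_nonneg hL1
    rw [Real.norm_of_nonneg hl, Real.norm_of_nonneg (by positivity)] at hL
    rw [div_mul_eq_mul_div, le_div_iff₀ (by positivity)] at hL
    nlinarith
  have h4 : ∀ᶠ L : ℝ in Filter.atTop, 16 ≤ L ^ (1 / 2 : ℝ) :=
    (tendsto_rpow_atTop (by norm_num)).eventually_ge_atTop 16
  have h5 : ∀ᶠ L : ℝ in Filter.atTop, c ≤ Real.log L :=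
    Real.tendsto_log_atTop.eventually_ge_atTop c
  have h6 : ∀ᶠ L : ℝ in Filter.atTop, x₀ ≤ Real.exp (L / 2) :=
    (Real.tendsto_exp_atTop.comp (Filter.tendsto_id.atTop_div_const (by norm_num : (0 : ℝ) < 2)))
      |>.eventually_ge_atTop x₀
  filter_upwards [h1, h2, h3, h4, h5, h6, Filter.eventually_ge_atTop 4] with L a1 a2 a3 a4 a5 a6 a7
  exact ⟨a7, a1, a2, by linarith, a5, a6⟩

/-- With `c = 1/(2(A+1))` and `z = X^(c/log log X)`: there are `μ ∈ (0,1)` and `C₁ > 0`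
such that for all sufficiently large `X`,
`0 ≤ S(X,z) - S(X) ≤ C₁·(X/(log z)^(1-ε) + X/(log z)^(εμ) + X/(log X)^A)`. -/
theorem statement10 (P : Polynomial ℝ) (hP : ¬ IsLiouvilleNumber (P.coeff 1))
    (ε A : ℝ) (hε : ε ∈ Set.Ioo (0 : ℝ) 1) (hA : 0 < A) :
    ∃ μ : ℝ, μ ∈ Set.Ioo (0 : ℝ) 1 ∧ ∃ C₁ > (0 : ℝ), ∃ X₂ : ℝ, ∀ X : ℝ, X ≥ X₂ →
      (0 : ℝ) ≤ (S2 P X (zf A X) : ℝ) - (S P X : ℝ) ∧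
      (S2 P X (zf A X) : ℝ) - (S P X : ℝ)
        ≤ C₁ * (X / (Real.log (zf A X)) ^ (1 - ε) + X / (Real.log (zf A X)) ^ (ε * μ)
            + X / (Real.log X) ^ A) := by
  obtain ⟨C, hC⟩ := main_count P hP
  set c : ℝ := 1 / (2 * (A + 1)) with hc
  have hcpos : 0 < c := by positivity
  obtain ⟨x₀, hx₀⟩ := Filter.eventually_atTop.1
    (Chebyshev.eventually_primeCounting_le (ε := 1) one_pos)
  refine ⟨1 / 2, ⟨by norm_num, by norm_num⟩, 1, one_pos, ?_⟩
  obtain ⟨X₂, hX₂⟩ := Filter.eventually_atTop.1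
    ((Real.tendsto_log_atTop.eventually (asym_L C c x₀ hcpos)).and
      (Filter.eventually_ge_atTop (1 : ℝ)))
  refine ⟨X₂, fun X hX => ?_⟩
  obtain ⟨⟨hL4, hz1, hK1, hfin, hcl, hx⟩, hX1⟩ := hX₂ X hX
  set L := Real.log X with hL
  have hX0 : 0 < X := by linarith
  have hXL : Real.exp L = X := Real.exp_log hX0
  have hlL : 0 < Real.log L := Real.log_pos (by linarith)
  have hlogz : Real.log (zf A X) = c / Real.log L * L := by
    unfold zf
    rw [Real.log_rpow hX0]
  have hzpos : 0 < zf A X := Real.rpow_pos_of_pos hX0 _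
  have hlz0 : 0 < Real.log (zf A X) := by rw [hlogz]; positivity
  have hlzL : Real.log (zf A X) ≤ L := by
    rw [hlogz]
    have : c / Real.log L ≤ 1 := (div_le_one hlL).2 hcl
    nlinarith
  set D : ℕ := ⌈L ^ 2⌉₊ with hD
  have hDlow : L ^ 2 ≤ D := Nat.le_ceil _
  have hDup : (D : ℝ) ≤ L ^ 3 := by
    have := (Nat.ceil_lt_add_one (by positivity : 0 ≤ L ^ 2)).le
    rw [← hD] at this
    nlinarith [sq_nonneg L]
  have hD2 : 2 ≤ D := by
    have : (2 : ℝ) ≤ D := by nlinarith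
    exact_mod_cast this
  set K : ℕ := D ^ C with hK
  have hKpos : 1 ≤ K := Nat.one_le_pow _ _ (by omega)
  have hKr : (1 : ℝ) ≤ K := by exact_mod_cast hKpos
  have hlogK : Real.log K ≤ 3 * C * Real.log L := by
    rw [hK]; push_cast
    rw [Real.log_pow]
    have : Real.log D ≤ Real.log (L ^ 3) :=
      Real.log_le_log (by have : 0 < D := by omega
                          exact_mod_cast this) hDup
    rw [Real.log_pow] at this
    push_cast at this
    calc (C : ℝ) * Real.log D ≤ C * (3 * Real.log L) := by gcongr
      _ = _ := by ring
  have hlogK0 : 0 ≤ Real.log K := Real.log_nonneg hKr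
  have hKz : (K : ℝ) ≤ zf A X := by
    rw [← Real.log_le_log_iff (by linarith) hzpos, hlogz]
    refine hlogK.trans ?_
    rw [div_mul_eq_mul_div, le_div_iff₀ hlL]
    linarith
  have hKX : (K : ℝ) ≤ Real.exp (L / 2) := by
    rw [← Real.log_le_iff_le_exp (by linarith)]
    linarith
  have hb := S2_bound P X (zf A X) D K hX1 hD2 hKpos hKz
    (fun N p hN hp => hC D N p hD2 hN hp)
  rw [← hL] at hb
  have hlog4 : Real.log 4 + 1 ≤ 3 := by
    have : Real.log 4 = 2 * Real.log 2 := by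
      rw [show (4 : ℝ) = 2 ^ 2 by norm_num, Real.log_pow]; norm_num
    linarith [Real.log_two_lt_d9]
  have hsum : ∑ m ∈ Finset.Icc 1 K, (Nat.primeCounting ⌊X / m⌋₊ : ℝ)
      ≤ 6 * X / L * (1 + Real.log K) := by
    calc ∑ m ∈ Finset.Icc 1 K, (Nat.primeCounting ⌊X / m⌋₊ : ℝ)
        ≤ ∑ m ∈ Finset.Icc 1 K, 6 * X / L * (1 / m) := by
          apply Finset.sum_le_sum
          intro m hm
          rw [Finset.mem_Icc] at hm
          have hm0 : (0 : ℝ) < m := by exact_mod_cast hm.1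
          have hmK : (m : ℝ) ≤ Real.exp (L / 2) := le_trans (by exact_mod_cast hm.2) hKX
          have hge : Real.exp (L / 2) ≤ X / m := by
            rw [le_div_iff₀ hm0]
            calc Real.exp (L / 2) * m ≤ Real.exp (L / 2) * Real.exp (L / 2) := by gcongr
              _ = X := by rw [← Real.exp_add, add_halves, hXL]
          have hlog : L / 2 ≤ Real.log (X / m) := by
            rw [Real.le_log_iff_exp_le (by positivity)]; exact hge
          refine (hx₀ (X / m) (hx.trans hge)).trans ?_
          calc (Real.log 4 + 1) * (X / m) / Real.log (X / m) ≤ 3 * (X / m) / (L / 2) := by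
                gcongr
            _ = 6 * X / L * (1 / m) := by field_simp; norm_num
      _ = 6 * X / L * ∑ m ∈ Finset.Icc 1 K, 1 / (m : ℝ) := by rw [Finset.mul_sum]
      _ ≤ 6 * X / L * (1 + Real.log K) := by gcongr; exact harm_bound K
  have hfirst : X / D * (1 + L) ≤ 2 * X / L := by
    calc X / D * (1 + L) ≤ X / L ^ 2 * (L + L) := by gcongr; linarith
      _ = 2 * X / L := by field_simp; norm_num
  have hLpos : 0 < L := by linarith
  have htot : (S2 P X (zf A X) : ℝ) - S P X ≤ X / L ^ (1 / 2 : ℝ) := by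
    have hsq : L ^ (1 / 2 : ℝ) * L ^ (1 / 2 : ℝ) = L := by
      rw [← Real.rpow_add hLpos]; norm_num
    have hs0 : 0 < L ^ (1 / 2 : ℝ) := by positivity
    calc (S2 P X (zf A X) : ℝ) - S P X ≤ 2 * X / L + 6 * X / L * (1 + Real.log K) := by linarith
      _ ≤ 2 * X / L + 6 * X / L * (1 + 3 * C * Real.log L) := by gcongr
      _ = X / L * (8 + 18 * C * Real.log L) := by ring
      _ ≤ X / L * L ^ (1 / 2 : ℝ) := by gcongr
      _ = X / L ^ (1 / 2 : ℝ) := by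
          rw [div_mul_eq_mul_div, div_eq_div_iff hLpos.ne' hs0.ne', mul_assoc, hsq]
  have hpow : (Real.log (zf A X)) ^ (ε * (1 / 2)) ≤ L ^ (1 / 2 : ℝ) := by
    calc (Real.log (zf A X)) ^ (ε * (1 / 2)) ≤ L ^ (ε * (1 / 2)) := by
          apply Real.rpow_le_rpow hlz0.le hlzL
          have := hε.1
          positivity
      _ ≤ L ^ (1 / 2 : ℝ) := by
          apply Real.rpow_le_rpow_of_exponent_le (by linarith)
          linarith [hε.2]
  constructor
  · have : (S P X : ℝ) ≤ S2 P X (zf A X) := by exact_mod_cast S_le_S2 P X (zf A X)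
    linarith
  · rw [one_mul]
    have t1 : 0 ≤ X / (Real.log (zf A X)) ^ (1 - ε) := by positivity
    have t3 : 0 ≤ X / L ^ A := by positivity
    have t2 : X / L ^ (1 / 2 : ℝ) ≤ X / (Real.log (zf A X)) ^ (ε * (1 / 2)) := by gcongr
    linarith
end

section
/- Let P ∈ ℝ[x] be a polynomial whose coefficient of x is non-Liouville. Fix ε ∈ (0,1) and A > 0, set c = 1/(2(A+1)) and z = X^{c/log log X}. Then there exist μ ∈ (0,1) and a constant C₁ > 0 such that for all sufficiently large X, | S(X,z) − X/ζ(2) | ≤ C₁·( X/(log z)^{εμ} + X/(log log X)^{1/3} ), where ζ(2) = π²/6. -/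
open Real Finset

namespace WeylAux

noncomputable def ee (x : ℝ) : ℂ := Complex.exp ((2 * π * x : ℝ) * Complex.I)

lemma ee_add (x y : ℝ) : ee (x + y) = ee x * ee y := by
  unfold ee; rw [← Complex.exp_add]; congr 1; push_cast; ring

lemma norm_ee (x : ℝ) : ‖ee x‖ = 1 := by
  unfold ee; exact Complex.norm_exp_ofReal_mul_I _

lemma ee_zero : ee 0 = 1 := by simp [ee]

lemma ee_int (n : ℤ) : ee n = 1 := by
  unfold ee
  rw [Complex.exp_eq_one_iff]
  exact ⟨n, by push_cast; ring⟩

lemma ee_add_int (x : ℝ) (n : ℤ) : ee (x + n) = ee x := by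
  rw [ee_add, ee_int, mul_one]

lemma ee_sub_int (x : ℝ) (n : ℤ) : ee (x - n) = ee x := by
  have := ee_add_int (x - n) n
  rw [sub_add_cancel] at this; exact this.symm

lemma ee_conj (x : ℝ) : (starRingEnd ℂ) (ee x) = ee (-x) := by
  unfold ee
  rw [← Complex.exp_conj, map_mul, Complex.conj_ofReal, Complex.conj_I]; congr 1
  push_cast; ring

lemma ee_nat_mul (n : ℕ) (x : ℝ) : ee (n * x) = ee x ^ n := by
  unfold ee; rw [← Complex.exp_nat_mul]; congr 1; push_cast; ring

lemma norm_ee_sub_one_le (x : ℝ) : ‖ee x - 1‖ ≤ 2 * π * |x| := by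
  unfold ee
  have := Real.norm_exp_I_mul_ofReal_sub_one_le (x := 2 * π * x)
  rw [mul_comm Complex.I] at this
  refine this.trans ?_
  rw [Real.norm_eq_abs, abs_mul, abs_of_pos (by positivity)]

lemma norm_ee_sub_le (x y : ℝ) : ‖ee x - ee y‖ ≤ 2 * π * |x - y| := by
  have : ee x - ee y = ee y * (ee (x - y) - 1) := by
    rw [mul_sub, ← ee_add]; simp
  rw [this, norm_mul, norm_ee, one_mul]
  exact norm_ee_sub_one_le _

lemma norm_ee_sub_one_ge (r : ℝ) (hr : |r| ≤ 1 / 2) : 4 * |r| ≤ ‖ee r - 1‖ := by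
  have h1 : ‖ee r - 1‖ = 2 * |Real.sin (π * r)| := by
    unfold ee
    rw [mul_comm _ Complex.I, Complex.norm_exp_I_mul_ofReal_sub_one]
    rw [Real.norm_eq_abs, abs_mul]
    norm_num
    congr 2; ring
  rw [h1]
  have h2 : |Real.sin (π * r)| = Real.sin (π * |r|) := by
    have hp : 0 ≤ Real.sin (π * |r|) := by
      apply Real.sin_nonneg_of_nonneg_of_le_pi (by positivity)
      nlinarith [Real.pi_pos, abs_nonneg r]
    rcases abs_cases r with ⟨h, _⟩ | ⟨h, _⟩
    · rw [h] at hp ⊢; exact abs_of_nonneg hp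
    · rw [h] at hp ⊢
      rw [← abs_of_nonneg hp, mul_neg, Real.sin_neg, abs_neg]
  rw [h2]
  have h3 := Real.mul_le_sin (x := π * |r|) (by positivity) (by nlinarith [Real.pi_pos])
  have : 2 / π * (π * |r|) = 2 * |r| := by field_simp
  linarith

lemma geom_mul_le (b c : ℝ) (N : ℕ) :
    ‖∑ y ∈ range N, ee (b * y + c)‖ * ‖ee b - 1‖ ≤ 2 := by
  have h1 : ∑ y ∈ range N, ee (b * y + c) = ee c * ∑ y ∈ range N, ee b ^ y := by
    rw [mul_sum]; refine sum_congr rfl fun y _ => ?_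
    rw [ee_add, mul_comm b, ee_nat_mul]; ring
  rw [h1, norm_mul, norm_ee, one_mul, ← norm_mul, geom_sum_mul]
  calc ‖ee b ^ N - 1‖ ≤ ‖ee b ^ N‖ + ‖(1:ℂ)‖ := norm_sub_le _ _
    _ = 2 := by rw [norm_pow, norm_ee]; norm_num

lemma geom_le_of_dist (s u : ℝ) (N : ℕ) (hs : 0 < s) (h1 : s ≤ u) (h2 : u ≤ 1 - s) :
    ‖∑ y ∈ range N, ee (u * y)‖ ≤ 1 / (2 * s) := by
  have h := geom_mul_le u 0 N
  simp only [add_zero] at h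
  have h4 : 4 * s ≤ ‖ee u - 1‖ := by
    by_cases hu : u ≤ 1 / 2
    · have := norm_ee_sub_one_ge u (by rw [abs_of_nonneg (by linarith)]; exact hu)
      rw [abs_of_nonneg (by linarith)] at this
      linarith
    · have := norm_ee_sub_one_ge (u - 1) (by rw [abs_le]; constructor <;> linarith)
      rw [abs_of_nonpos (by linarith)] at this
      have e1 := ee_sub_int u 1
      norm_num at e1
      rw [e1] at this
      linarith
  rw [le_div_iff₀ (by positivity)]
  nlinarith [norm_nonneg (∑ y ∈ range N, ee (u * y))]

end WeylAux

namespace WeylAux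

lemma card_le_of_diam (s : Finset ℕ) (D : ℝ) (_hD : 0 ≤ D)
    (h : ∀ x ∈ s, ∀ y ∈ s, (x : ℝ) - y ≤ D) : s.card ≤ ⌊D⌋₊ + 1 := by
  rcases s.eq_empty_or_nonempty with rfl | hne
  · simp
  · have hsub : s ⊆ Icc (s.min' hne) (s.min' hne + ⌊D⌋₊) := by
      intro x hx
      rw [mem_Icc]
      refine ⟨s.min'_le x hx, ?_⟩
      have h1 := h x hx _ (s.min'_mem hne)
      have h2 : x - s.min' hne ≤ ⌊D⌋₊ := by
        apply Nat.le_floor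
        rw [Nat.cast_sub (s.min'_le x hx)]; exact h1
      omega
    have := card_le_card hsub
    simp at this
    omega

lemma vino_fiber (α ε θ : ℝ) (a : ℤ) (q N r : ℕ) (hq : 1 ≤ q) (H : Finset ℕ) (hH : H ⊆ range N)
    (hε : 0 ≤ ε) (hε2 : ε ≤ 1 / 2) (hθ : θ = q * α - a) (hθ0 : θ ≠ 0) (m : ℕ → ℤ)
    (hα : ∀ h ∈ H, |α * h - m h| ≤ ε) (hr : ∀ h ∈ H, h % q = r) :
    (H.card : ℝ) ≤ (4 * ε * q / |θ| + 1) * (2 * (|θ| * N / q) + 3) := by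
  have hθp : 0 < |θ| := abs_pos.mpr hθ0
  have hqp : (0 : ℝ) < q := by exact_mod_cast hq
  rcases H.eq_empty_or_nonempty with rfl | ⟨h0, hh0⟩
  · simp; positivity
  let n : ℕ → ℤ := fun h => m h - m h0 - a * (((h / q : ℕ) : ℤ) - ((h0 / q : ℕ) : ℤ))
  have key : ∀ h ∈ H, |θ * (((h : ℝ) - h0) / q) - n h| ≤ 2 * ε := by
    intro h hh
    have e1 := hα h hh
    have e2 := hα h0 hh0
    have d1 : (h : ℝ) = q * (h / q : ℕ) + r := by
      have := Nat.div_add_mod h q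
      rw [hr h hh] at this; exact_mod_cast this.symm
    have d2 : (h0 : ℝ) = q * (h0 / q : ℕ) + r := by
      have := Nat.div_add_mod h0 q
      rw [hr h0 hh0] at this; exact_mod_cast this.symm
    have d3 : ((h : ℝ) - h0) / q = (h / q : ℕ) - (h0 / q : ℕ) := by
      rw [div_eq_iff hqp.ne']; linarith
    have e3 : θ * (((h : ℝ) - h0) / q) - n h = (α * h - m h) - (α * h0 - m h0) := by
      rw [d3, hθ]
      simp only [n, Int.cast_sub, Int.cast_mul, Int.cast_natCast]
      have : α * h - α * h0 = α * (q * ((h / q : ℕ) - (h0 / q : ℕ))) := by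
        rw [d1, d2]
        ring
      linear_combination (-1 : ℝ) * this
    rw [e3]
    calc _ ≤ |α * h - m h| + |α * h0 - m h0| := abs_sub _ _
      _ ≤ 2 * ε := by linarith
  set k : ℤ := ⌊|θ| * N / q + 2 * ε⌋ with hk
  have hk0 : 0 ≤ k := Int.floor_nonneg.mpr (by positivity)
  have himg : H.image n ⊆ Icc (-k) k := by
    intro t ht
    obtain ⟨h, hh, rfl⟩ := mem_image.mp ht
    have hb : |(n h : ℝ)| ≤ |θ| * N / q + 2 * ε := by
      have e1 := key h hh
      have e2 : |θ * (((h : ℝ) - h0) / q)| ≤ |θ| * N / q := by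
        rw [abs_mul, abs_div, abs_of_pos hqp, mul_div_assoc]
        gcongr
        have l1 : (h : ℝ) < N := by exact_mod_cast mem_range.mp (hH hh)
        have l2 : (h0 : ℝ) < N := by exact_mod_cast mem_range.mp (hH hh0)
        rw [abs_le]; constructor <;> linarith [Nat.cast_nonneg (α := ℝ) h, Nat.cast_nonneg (α := ℝ) h0]
      have := abs_sub_abs_le_abs_sub (n h : ℝ) (θ * (((h : ℝ) - h0) / q))
      rw [abs_sub_comm] at this
      linarith
    have : |n h| ≤ k := by
      apply Int.le_floor.mpr
      push_cast; exact hb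
    rw [mem_Icc]; exact abs_le.mp this
  have hfib : ∀ t ∈ H.image n, (H.filter (fun h => n h = t)).card ≤ ⌊4 * ε * q / |θ|⌋₊ + 1 := by
    intro t _
    apply card_le_of_diam _ _ (by positivity)
    intro x hx y hy
    rw [mem_filter] at hx hy
    have e1 := key x hx.1
    have e2 := key y hy.1
    rw [hx.2] at e1; rw [hy.2] at e2
    have e3 : |θ * (((x : ℝ) - y) / q)| ≤ 4 * ε := by
      have : θ * (((x : ℝ) - y) / q) = (θ * (((x : ℝ) - h0) / q) - t) - (θ * (((y : ℝ) - h0) / q) - t) := by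
        ring
      rw [this]
      exact (abs_sub _ _).trans (by linarith)
    rw [abs_mul, abs_div, abs_of_pos hqp] at e3
    rw [le_div_iff₀ hθp]
    have e4 : |θ| * |(x : ℝ) - y| ≤ 4 * ε * q := by
      rw [← mul_div_assoc, div_le_iff₀ hqp] at e3; exact e3
    nlinarith [le_abs_self ((x : ℝ) - y)]
  have hc := Finset.card_le_mul_card_image H _ hfib
  have hc2 : ((H.image n).card : ℝ) ≤ 2 * (|θ| * N / q) + 3 := by
    have h1 := card_le_card himg
    rw [Int.card_Icc] at h1
    have h2 : (((k + 1 - -k).toNat : ℤ) : ℝ) = 2 * k + 1 := by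
      rw [Int.toNat_of_nonneg (by omega)]; push_cast; ring
    have h3 : ((H.image n).card : ℝ) ≤ ((k + 1 - -k).toNat : ℕ) := by exact_mod_cast h1
    rw [Int.cast_natCast] at h2
    rw [h2] at h3
    have h4 : (k : ℝ) ≤ |θ| * N / q + 2 * ε := Int.floor_le _
    linarith
  calc (H.card : ℝ) ≤ ((⌊4 * ε * q / |θ|⌋₊ + 1 : ℕ) : ℝ) * (H.image n).card := by exact_mod_cast hc
    _ ≤ _ := by
      gcongr
      push_cast
      gcongr
      exact Nat.floor_le (by positivity)

lemma vino (α ε : ℝ) (M N : ℕ) (hM : 1 ≤ M) (H : Finset ℕ) (hH : H ⊆ range N)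
    (hcard : N ≤ M * H.card) (hε : 0 ≤ ε) (hε2 : ε * (80 * M ^ 2) ≤ 1) (hN : 100 * M ^ 2 ≤ N)
    (hα : ∀ h ∈ H, ∃ m : ℤ, |α * h - m| ≤ ε) :
    ∃ q : ℕ, 1 ≤ q ∧ q ≤ 2 * M ∧ ∃ m : ℤ, |q * α - m| ≤ 400 * M ^ 3 * ε / N := by
  have hMp : (1 : ℝ) ≤ M := by exact_mod_cast hM
  have hNp : (0 : ℝ) < N := by
    have : 0 < N := by nlinarith
    exact_mod_cast this
  have hα' : ∀ h, ∃ m : ℤ, h ∈ H → |α * h - m| ≤ ε := by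
    intro h
    by_cases hh : h ∈ H
    · obtain ⟨m, hm⟩ := hα h hh; exact ⟨m, fun _ => hm⟩
    · exact ⟨0, fun h' => absurd h' hh⟩
  choose m hm using hα'
  have hlt : (range (N / (2 * M) + 1)).card < H.card := by
    rw [card_range]
    have h1 : N / (2 * M) * (2 * M) ≤ N := Nat.div_mul_le_self _ _
    by_contra hcon
    push Not at hcon
    have : M * H.card ≤ M * (N / (2 * M) + 1) := Nat.mul_le_mul_left _ hcon
    nlinarith
  obtain ⟨x, hx, y, hy, hxy, hdiv⟩ := exists_ne_map_eq_of_card_lt_of_maps_to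
    (f := fun h => h / (2 * M)) hlt (by
      intro h hh
      have := mem_range.mp (hH hh)
      simp only [coe_range, Set.mem_Iio]
      exact Nat.lt_succ_of_le (Nat.div_le_div_right this.le))
  obtain ⟨x, hx, y, hy, hxy, hdiv⟩ : ∃ x ∈ H, ∃ y ∈ H, y < x ∧ x / (2 * M) = y / (2 * M) := by
    rcases lt_or_gt_of_ne hxy with h | h
    · exact ⟨y, hy, x, hx, h, hdiv.symm⟩
    · exact ⟨x, hx, y, hy, h, hdiv⟩
  set q := x - y with hq
  have hq1 : 1 ≤ q := by omega
  have hq2 : q ≤ 2 * M := by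
    have h1 := Nat.div_add_mod x (2 * M)
    have h2 := Nat.div_add_mod y (2 * M)
    have h3 := Nat.mod_lt x (show 0 < 2 * M by omega)
    rw [hdiv] at h1
    omega
  have hqp : (1 : ℝ) ≤ q := by exact_mod_cast hq1
  have hq2' : (q : ℝ) ≤ 2 * M := by exact_mod_cast hq2
  refine ⟨q, hq1, hq2, m x - m y, ?_⟩
  set θ : ℝ := q * α - (m x - m y : ℤ) with hθ
  have hθ2 : |θ| ≤ 2 * ε := by
    have : θ = (α * x - m x) - (α * y - m y) := by
      rw [hθ, hq, Nat.cast_sub hxy.le]; push_cast; ring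
    rw [this]
    exact (abs_sub _ _).trans (by linarith [hm x hx, hm y hy])
  by_cases hθ0 : θ = 0
  · rw [hθ0, abs_zero]; positivity
  have hθp : 0 < |θ| := abs_pos.mpr hθ0
  have hεh : ε ≤ 1 / 80 := by nlinarith [mul_le_mul_of_nonneg_left (one_le_pow₀ hMp (n := 2)) hε]
  set F : ℝ := (4 * ε * q / |θ| + 1) * (2 * (|θ| * N / q) + 3) with hF
  have hF0 : 0 ≤ F := by positivity
  have hfib : ∀ t ∈ H.image (fun h => h % q), (H.filter (fun h => h % q = t)).card ≤ ⌊F⌋₊ := by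
    intro t _
    apply Nat.le_floor
    exact vino_fiber α ε θ (m x - m y) q N t hq1 _ ((filter_subset _ _).trans hH) hε
      (by linarith) hθ hθ0 m (fun h hh => hm h (mem_filter.mp hh).1)
      (fun h hh => (mem_filter.mp hh).2)
  have hc := Finset.card_le_mul_card_image H _ hfib
  have hc2 : (H.image (fun h => h % q)).card ≤ q := by
    have : H.image (fun h => h % q) ⊆ range q := by
      intro t ht
      obtain ⟨h, _, rfl⟩ := mem_image.mp ht
      exact mem_range.mpr (Nat.mod_lt _ hq1)
    simpa using card_le_card this
  have hc3 : (H.card : ℝ) ≤ F * q := by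
    calc (H.card : ℝ) ≤ (⌊F⌋₊ : ℝ) * (H.image (fun h => h % q)).card := by exact_mod_cast hc
      _ ≤ F * q := by
        gcongr
        · exact Nat.floor_le hF0
  have hFq : F * q = 8 * ε * q * N + 12 * q ^ 2 * ε / |θ| + 2 * |θ| * N + 3 * q := by
    rw [hF]; field_simp; ring
  rw [hFq] at hc3
  have hN1 : (N : ℝ) ≤ M * H.card := by exact_mod_cast hcard
  have hN2 : (100 : ℝ) * M ^ 2 ≤ N := by exact_mod_cast hN
  have hX : (N : ℝ) ≤ M * (8 * ε * q * N + 12 * q ^ 2 * ε / |θ| + 2 * |θ| * N + 3 * q) :=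
    hN1.trans (by gcongr)
  have t1 : M * (8 * ε * q * N) ≤ N / 5 := by
    have : M * (8 * ε * q * N) ≤ M * (8 * ε * (2 * M) * N) := by gcongr
    nlinarith
  have t2 : M * (2 * |θ| * N) ≤ N / 20 := by
    have : M * (2 * |θ| * N) ≤ M * (2 * (2 * ε) * N) := by gcongr
    have h3 : ε * (80 * M) ≤ 1 := by
      refine le_trans ?_ hε2
      gcongr
      nlinarith
    nlinarith
  have t3 : M * (3 * (q : ℝ)) ≤ 6 * N / 100 := by nlinarith
  have t4 : M * (12 * q ^ 2 * ε / |θ|) ≤ 48 * M ^ 3 * ε / |θ| := by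
    rw [← mul_div_assoc]
    apply div_le_div_of_nonneg_right _ hθp.le
    have : (q : ℝ) ^ 2 ≤ (2 * M) ^ 2 := by gcongr
    have : (M : ℝ) * (12 * q ^ 2 * ε) ≤ M * (12 * (2 * M) ^ 2 * ε) := by gcongr
    linarith
  have t5 : (N : ℝ) / 4 ≤ 48 * M ^ 3 * ε / |θ| := by linarith
  rw [le_div_iff₀ hθp] at t5
  rw [le_div_iff₀ hNp]
  have : 0 ≤ M ^ 3 * ε := by positivity
  linarith

end WeylAux

namespace WeylAux

open Polynomial in
/-- Inverse Weyl statement for the leading coefficient. -/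
def LP (k : ℕ) : Prop := ∃ C : ℕ, ∀ M N : ℕ, 2 ≤ M → 1 ≤ N → ∀ Q : ℝ[X], Q.natDegree ≤ k →
  (N : ℝ) ≤ M * ‖∑ y ∈ range N, ee (Q.eval (y : ℝ))‖ →
  ∃ q : ℕ, 1 ≤ q ∧ q ≤ M ^ C ∧ ∃ m : ℤ, |q * Q.coeff k - m| ≤ (M : ℝ) ^ C / (N : ℝ) ^ k

lemma vdc_eq (f : ℕ → ℝ) (N : ℕ) :
    ‖∑ y ∈ range N, ee (f y)‖ ^ 2 + N =
      2 * (∑ x ∈ range N, ∑ h ∈ range (x + 1), ee (f (h + (x - h)) - f (x - h))).re := by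
  induction N with
  | zero => simp
  | succ N ih =>
    rw [sum_range_succ, sum_range_succ (fun x => ∑ h ∈ range (x + 1), _), Complex.add_re, mul_add, ← ih]
    have h1 : ∑ h ∈ range (N + 1), ee (f (h + (N - h)) - f (N - h)) =
        1 + (starRingEnd ℂ) (∑ y ∈ range N, ee (f y)) * ee (f N) := by
      rw [← sum_range_reflect]
      rw [sum_range_succ, map_sum, sum_mul, add_comm]
      congr 1
      · simp [ee_zero]
      · refine sum_congr rfl fun y hy => ?_
        have := mem_range.mp hy
        rw [ee_conj, ← ee_add]
        have e1 : N + 1 - 1 - y + (N - (N + 1 - 1 - y)) = N := by omega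
        have e2 : N - (N + 1 - 1 - y) = y := by omega
        rw [e1, e2]; congr 1; ring
    rw [h1]
    set S := ∑ y ∈ range N, ee (f y)
    have h2 : ‖ee (f N)‖ ^ 2 = 1 := by rw [norm_ee]; norm_num
    rw [← Complex.normSq_eq_norm_sq] at h2 ⊢
    rw [← Complex.normSq_eq_norm_sq]
    rw [Complex.normSq_apply] at h2 ⊢
    rw [Complex.normSq_apply]
    simp only [Complex.add_re, Complex.add_im, Complex.one_re, Complex.mul_re, Complex.conj_re,
      Complex.conj_im]
    push_cast
    linear_combination h2

lemma vdc (f : ℕ → ℝ) (N : ℕ) :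
    ‖∑ y ∈ range N, ee (f y)‖ ^ 2 ≤
      2 * ∑ h ∈ range N, ‖∑ y ∈ range (N - h), ee (f (h + y) - f y)‖ := by
  have h1 := vdc_eq f N
  have h2 := Finset.sum_range_diag_flip N (fun h y => ee (f (h + y) - f y))
  rw [h2] at h1
  have h3 : (∑ h ∈ range N, ∑ y ∈ range (N - h), ee (f (h + y) - f y)).re ≤
      ∑ h ∈ range N, ‖∑ y ∈ range (N - h), ee (f (h + y) - f y)‖ :=
    (Complex.re_le_norm _).trans (norm_sum_le _ _)
  have : (0 : ℝ) ≤ N := by positivity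
  linarith

lemma norm_sum_ee_le (f : ℕ → ℝ) (N : ℕ) : ‖∑ y ∈ range N, ee (f y)‖ ≤ N := by
  refine (norm_sum_le _ _).trans ?_
  simp [norm_ee]

lemma vdc_many (f : ℕ → ℝ) (M N : ℕ) (hM : 2 ≤ M) (hN : 1 ≤ N)
    (h : (N : ℝ) ≤ M * ‖∑ y ∈ range N, ee (f y)‖) :
    ∃ H ⊆ range N, N ≤ M ^ 4 * H.card ∧
      ∀ h ∈ H, (N : ℝ) ≤ (M : ℝ) ^ 4 * ‖∑ y ∈ range (N - h), ee (f (h + y) - f y)‖ := by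
  classical
  set T : ℕ → ℝ := fun h => ‖∑ y ∈ range (N - h), ee (f (h + y) - f y)‖ with hT
  have hMr : (2 : ℝ) ≤ M := by exact_mod_cast hM
  have hNr : (1 : ℝ) ≤ N := by exact_mod_cast hN
  have hM4 : (4 : ℝ) * M ^ 2 ≤ M ^ 4 := by nlinarith [pow_le_pow_left₀ (by norm_num) hMr 2, sq_nonneg (M : ℝ)]
  refine ⟨(range N).filter (fun h => (N : ℝ) ≤ 4 * (M : ℝ) ^ 2 * T h), filter_subset _ _, ?_, ?_⟩
  swap
  · intro x hx
    refine (mem_filter.mp hx).2.trans ?_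
    gcongr
  set H := (range N).filter (fun h => (N : ℝ) ≤ 4 * (M : ℝ) ^ 2 * T h) with hH
  have hTN : ∀ x, T x ≤ N := fun x => by
    refine (norm_sum_ee_le (fun y => f (x + y) - f y) (N - x)).trans ?_
    exact_mod_cast Nat.sub_le _ _
  have h1 := vdc f N
  have h2 : ∑ x ∈ range N, T x ≤ ∑ x ∈ range N, ((if x ∈ H then (N : ℝ) else 0) + N / (4 * M ^ 2)) := by
    refine sum_le_sum fun x hx => ?_
    split_ifs with hxH
    · have := hTN x
      have : (0 : ℝ) ≤ N / (4 * M ^ 2) := by positivity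
      linarith [hTN x]
    · rw [zero_add, le_div_iff₀ (by positivity)]
      have : ¬ ((N : ℝ) ≤ 4 * (M : ℝ) ^ 2 * T x) := fun hc => hxH (mem_filter.mpr ⟨hx, hc⟩)
      linarith
  rw [sum_add_distrib, sum_ite_mem, inter_eq_right.mpr (filter_subset _ _)] at h2
  simp only [sum_const, card_range, nsmul_eq_mul] at h2
  have h3 : (N : ℝ) ^ 2 ≤ M ^ 2 * (2 * ∑ x ∈ range N, T x) := by
    calc (N : ℝ) ^ 2 ≤ (M * ‖∑ y ∈ range N, ee (f y)‖) ^ 2 := by gcongr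
      _ = M ^ 2 * ‖∑ y ∈ range N, ee (f y)‖ ^ 2 := by ring
      _ ≤ _ := by gcongr
  have h4 : (N : ℝ) ^ 2 ≤ M ^ 2 * (2 * (H.card * N + N * (N / (4 * M ^ 2)))) :=
    h3.trans (by gcongr)
  have h5 : (M : ℝ) ^ 2 * (2 * (H.card * N + N * (N / (4 * M ^ 2)))) = 2 * M ^ 2 * H.card * N + N ^ 2 / 2 := by
    field_simp; ring
  rw [h5] at h4
  have h6 : (N : ℝ) ≤ 4 * M ^ 2 * H.card := by nlinarith
  have h7 : (N : ℝ) ≤ M ^ 4 * H.card := h6.trans (by gcongr)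
  exact_mod_cast h7

open Polynomial in
lemma diff_poly (Q : ℝ[X]) (k : ℕ) (hQ : Q.natDegree ≤ k + 1) (h : ℝ) :
    (taylor h Q - Q).natDegree ≤ k ∧ (taylor h Q - Q).coeff k = (k + 1) * h * Q.coeff (k + 1) := by
  have hz : ∀ n, k + 1 < n → Q.coeff n = 0 := fun n hn =>
    coeff_eq_zero_of_natDegree_lt (by omega)
  constructor
  · rw [natDegree_le_iff_coeff_eq_zero]
    intro n hn
    rcases Nat.lt_or_ge (k + 1) n with h1 | h1
    · rw [coeff_sub, hz n h1, coeff_eq_zero_of_natDegree_lt (by rw [natDegree_taylor]; omega)]; simp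
    · have : n = k + 1 := by omega
      subst this
      rw [coeff_sub, taylor_coeff]
      have : hasseDeriv (k + 1) Q = C (Q.coeff (k + 1)) := by
        ext n
        rw [hasseDeriv_coeff, coeff_C]
        split_ifs with hn
        · subst hn; simp
        · rw [hz _ (by omega)]; simp
      rw [this]; simp
  · rw [coeff_sub, taylor_coeff]
    have : hasseDeriv k Q = C (Q.coeff k) + C ((k + 1) * Q.coeff (k + 1)) * X := by
      ext n
      rw [hasseDeriv_coeff, coeff_add, coeff_C, coeff_C_mul_X]
      rcases n with _ | _ | n
      · simp
      · simp [add_comm 1 k]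
      · rw [hz _ (by omega)]; simp
    rw [this]; simp; ring

lemma LP_one : LP 1 := by
  refine ⟨1, fun M N hM hN Q hQ h => ⟨1, le_rfl, by simp; omega, round (Q.coeff 1), ?_⟩⟩
  have hNr : (1 : ℝ) ≤ N := by exact_mod_cast hN
  set b := Q.coeff 1
  have h1 : ∀ y : ℕ, Q.eval (y : ℝ) = b * y + Q.coeff 0 := by
    intro y
    rw [Polynomial.eval_eq_sum_range' (n := 2) (by omega)]
    simp [sum_range_succ]; ring
  simp only [h1] at h
  have h2 := geom_mul_le b (Q.coeff 0) N
  have h3 := norm_ee_sub_one_ge (b - round b) (abs_sub_round b)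
  rw [ee_sub_int] at h3
  simp only [Nat.cast_one, one_mul, pow_one]
  rw [le_div_iff₀ (by linarith)]
  set S := ‖∑ y ∈ range N, ee (b * y + Q.coeff 0)‖
  have h4 : S * (4 * |b - round b|) ≤ 2 := le_trans (by gcongr) h2
  have h5 : |b - round b| * N ≤ |b - round b| * (M * S) := by gcongr
  have hM' : (0 : ℝ) ≤ M := by positivity
  nlinarith

lemma trivial_bound (b : ℝ) (M N E i K : ℕ) (hM : 2 ≤ M) (hN : 1 ≤ N) (hNM : N ≤ M ^ E) (hK : E * i ≤ K) :
    |b - round b| ≤ (M : ℝ) ^ K / (N : ℝ) ^ i := by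
  have hNr : (1 : ℝ) ≤ N := by exact_mod_cast hN
  have hMr : (1 : ℝ) ≤ M := by exact_mod_cast (by omega : 1 ≤ M)
  refine (abs_sub_round b).trans ?_
  rw [le_div_iff₀ (by positivity)]
  have h1 : (N : ℝ) ^ i ≤ ((M : ℝ) ^ E) ^ i := by gcongr; exact_mod_cast hNM
  rw [← pow_mul] at h1
  have h2 : (M : ℝ) ^ (E * i) ≤ M ^ K := pow_le_pow_right₀ hMr hK
  have : (0 : ℝ) ≤ (N : ℝ) ^ i := by positivity
  linarith

lemma LP_succ (k : ℕ) (hk : 1 ≤ k) (ih : LP k) : LP (k + 1) := by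
  classical
  obtain ⟨C, hC⟩ := ih
  set E := 12 * C + 15 + 4 * k with hE
  refine ⟨E * (k + 1) + 16 * C + 21 + 4 * k, fun M N hM hN Q hQ h => ?_⟩
  set K := E * (k + 1) + 16 * C + 21 + 4 * k with hK
  have hMr : (2 : ℝ) ≤ M := by exact_mod_cast hM
  have hM1 : (1 : ℝ) ≤ M := by linarith
  have hNr : (1 : ℝ) ≤ N := by exact_mod_cast hN
  set b := Q.coeff (k + 1) with hb
  rcases Nat.lt_or_ge N (M ^ E) with hNE | hNE
  · refine ⟨1, le_rfl, Nat.one_le_pow _ _ (by omega), round b, ?_⟩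
    rw [Nat.cast_one, one_mul]
    exact trivial_bound b M N E (k + 1) K hM hN hNE.le (by omega)
  obtain ⟨H, hHN, hHc, hH⟩ := vdc_many (fun y => Q.eval (y : ℝ)) M N hM hN h
  have step : ∀ h : ℕ, ∃ q : ℕ, h ∈ H → 1 ≤ q ∧ q ≤ M ^ (4 * C) ∧ ∃ m : ℤ,
      |q * ((k + 1) * h * b) - m| ≤ (M : ℝ) ^ (4 * C + 4 * k) / (N : ℝ) ^ k := by
    intro h
    by_cases hh : h ∈ H
    swap
    · exact ⟨0, fun h' => absurd h' hh⟩
    have hlt := mem_range.mp (hHN hh)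
    obtain ⟨hd, hc⟩ := diff_poly Q k hQ h
    have hT := hH h hh
    have hsum : ∑ y ∈ range (N - h), ee (Q.eval ((h + y : ℕ) : ℝ) - Q.eval (y : ℝ)) =
        ∑ y ∈ range (N - h), ee ((Polynomial.taylor (h : ℝ) Q - Q).eval (y : ℝ)) := by
      refine sum_congr rfl fun y _ => ?_
      rw [Polynomial.eval_sub, Polynomial.taylor_eval]
      push_cast
      rw [add_comm (h : ℝ)]
    rw [hsum] at hT
    have hle : ((N - h : ℕ) : ℝ) ≤ N := by exact_mod_cast Nat.sub_le _ _
    obtain ⟨q, hq1, hq2, m, hm⟩ := hC (M ^ 4) (N - h) (by nlinarith [Nat.pow_le_pow_left hM 4]) (by omega) _ hd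
      (by push_cast; exact hle.trans hT)
    refine ⟨q, fun _ => ⟨hq1, by rw [pow_mul]; exact hq2, m, ?_⟩⟩
    rw [hc] at hm
    refine hm.trans ?_
    have hNh : (N : ℝ) ≤ M ^ 4 * ((N - h : ℕ) : ℝ) := by
      refine hT.trans ?_
      gcongr
      exact norm_sum_ee_le _ _
    have hpos : (0 : ℝ) < ((N - h : ℕ) : ℝ) := by exact_mod_cast (by omega : 0 < N - h)
    rw [div_le_div_iff₀ (by positivity) (by positivity)]
    push_cast
    calc ((M : ℝ) ^ 4) ^ C * (N : ℝ) ^ k ≤ ((M : ℝ) ^ 4) ^ C * (M ^ 4 * ((N - h : ℕ) : ℝ)) ^ k := by gcongr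
      _ = _ := by rw [mul_pow, pow_add, pow_mul, pow_mul]; ring
  choose qf hqf using step
  have hmaps : ∀ a ∈ H, qf a ∈ Icc 1 (M ^ (4 * C)) := fun a ha =>
    mem_Icc.mpr ⟨(hqf a ha).1, (hqf a ha).2.1⟩
  obtain ⟨q, hq, hqc⟩ := Finset.exists_le_card_fiber_of_nsmul_le_card_of_maps_to
    (M := ℝ) (b := (N : ℝ) / M ^ (4 * C + 4)) hmaps
    (nonempty_Icc.mpr (Nat.one_le_pow _ _ (by omega))) (by
      rw [Nat.card_Icc, nsmul_eq_mul]
      simp only [Nat.add_sub_cancel]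
      push_cast
      have : (M : ℝ) ^ (4 * C) * ((N : ℝ) / M ^ (4 * C + 4)) = N / M ^ 4 := by
        rw [pow_add]; field_simp
      rw [this, div_le_iff₀ (by positivity), mul_comm]
      exact_mod_cast hHc)
  rw [mem_Icc] at hq
  set H' := H.filter (fun x => qf x = q) with hH'
  have hcard : N ≤ M ^ (4 * C + 4) * H'.card := by
    rw [div_le_iff₀ (by positivity), mul_comm] at hqc
    exact_mod_cast hqc
  have hNEr : (M : ℝ) ^ E ≤ N := by exact_mod_cast hNE
  have h7 : (100 : ℝ) ≤ M ^ 7 := by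
    calc (100 : ℝ) ≤ 2 ^ 7 := by norm_num
      _ ≤ _ := by gcongr
  have h9 : (400 : ℝ) ≤ M ^ 9 := by
    calc (400 : ℝ) ≤ 2 ^ 9 := by norm_num
      _ ≤ _ := by gcongr
  obtain ⟨q', hq'1, hq'2, m, hm⟩ := vino (q * (k + 1) * b) ((M : ℝ) ^ (4 * C + 4 * k) / (N : ℝ) ^ k)
    (M ^ (4 * C + 4)) N (Nat.one_le_pow _ _ (by omega)) H' ((filter_subset _ _).trans hHN) hcard
    (by positivity) (by
      have hNk : (N : ℝ) ≤ N ^ k := le_self_pow₀ hNr (by omega)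
      rw [div_mul_eq_mul_div, div_le_one (by positivity)]
      refine le_trans ?_ (hNEr.trans hNk)
      push_cast
      calc (M : ℝ) ^ (4 * C + 4 * k) * (80 * ((M : ℝ) ^ (4 * C + 4)) ^ 2)
          ≤ (M : ℝ) ^ (4 * C + 4 * k) * ((M : ℝ) ^ 7 * ((M : ℝ) ^ (4 * C + 4)) ^ 2) := by gcongr; linarith
        _ = (M : ℝ) ^ E := by rw [hE, ← pow_mul, ← pow_add, ← pow_add]; congr 1; ring)
    (by
      have : (100 : ℝ) * ((M : ℝ) ^ (4 * C + 4)) ^ 2 ≤ N := by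
        refine le_trans ?_ hNEr
        calc (100 : ℝ) * ((M : ℝ) ^ (4 * C + 4)) ^ 2 ≤ (M : ℝ) ^ 7 * ((M : ℝ) ^ (4 * C + 4)) ^ 2 := by gcongr
          _ = (M : ℝ) ^ (8 * C + 15) := by rw [← pow_mul, ← pow_add]; congr 1; ring
          _ ≤ _ := pow_le_pow_right₀ hM1 (by omega)
      exact_mod_cast this)
    (by
      intro x hx
      rw [hH', mem_filter] at hx
      obtain ⟨_, _, m, hm⟩ := hqf x hx.1
      rw [hx.2] at hm
      refine ⟨m, ?_⟩
      have e : (q : ℝ) * (k + 1) * b * x = q * ((k + 1) * x * b) := by ring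
      rw [e]; exact hm)
  refine ⟨q' * (q * (k + 1)), ?_, ?_, m, ?_⟩
  · have : 0 < q' * (q * (k + 1)) := by
      have := hq.1
      positivity
    omega
  · have hk2 : k + 1 ≤ M ^ (k + 1) := (Nat.lt_pow_self (by omega)).le
    calc q' * (q * (k + 1)) ≤ (M * M ^ (4 * C + 4)) * (M ^ (4 * C) * M ^ (k + 1)) := by
          gcongr
          · exact hq'2.trans (by gcongr)
          · exact hq.2
      _ = M ^ (1 + (4 * C + 4) + (4 * C + (k + 1))) := by ring
      _ ≤ _ := Nat.pow_le_pow_right (by omega) (by omega)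
  · have e : ((q' * (q * (k + 1)) : ℕ) : ℝ) * b = q' * (q * (k + 1) * b) := by push_cast; ring
    rw [e]
    refine hm.trans ?_
    rw [mul_div_assoc', div_div, ← pow_succ]
    apply div_le_div_of_nonneg_right _ (by positivity)
    push_cast
    calc (400 : ℝ) * ((M : ℝ) ^ (4 * C + 4)) ^ 3 * (M : ℝ) ^ (4 * C + 4 * k)
        ≤ (M : ℝ) ^ 9 * ((M : ℝ) ^ (4 * C + 4)) ^ 3 * (M : ℝ) ^ (4 * C + 4 * k) := by gcongr
      _ = (M : ℝ) ^ (16 * C + 21 + 4 * k) := by rw [← pow_mul, ← pow_add, ← pow_add]; congr 1; ring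
      _ ≤ _ := pow_le_pow_right₀ hM1 (by omega)

lemma LP_all (k : ℕ) (hk : 1 ≤ k) : LP k := by
  induction k, hk using Nat.le_induction with
  | base => exact LP_one
  | succ k hk ih => exact LP_succ k hk ih

end WeylAux

namespace WeylAux

lemma shift_sum (f : ℕ → ℂ) (hf : ∀ y, ‖f y‖ ≤ 1) (N s : ℕ) :
    ‖∑ y ∈ range N, f y - ∑ y ∈ range N, f (y + s)‖ ≤ 2 * s := by
  induction s with
  | zero => simp
  | succ s ih =>
    have h1 : ∑ y ∈ range N, f (y + s) - ∑ y ∈ range N, f (y + (s + 1)) = f s - f (N + s) := by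
      have h2 := sum_range_succ (fun y => f (y + s)) N
      have h3 := sum_range_succ' (fun y => f (y + s)) N
      rw [h2] at h3
      have h4 : ∑ y ∈ range N, f (y + (s + 1)) = ∑ y ∈ range N, f (y + 1 + s) :=
        sum_congr rfl fun y _ => by congr 1; ring
      rw [h4]
      simp only [zero_add] at h3
      linear_combination h3
    have h5 : ∑ y ∈ range N, f y - ∑ y ∈ range N, f (y + (s + 1)) =
        (∑ y ∈ range N, f y - ∑ y ∈ range N, f (y + s)) + (f s - f (N + s)) := by
      rw [← h1]; ring
    rw [h5]
    have h6 := norm_add_le (∑ y ∈ range N, f y - ∑ y ∈ range N, f (y + s)) (f s - f (N + s))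
    have h7 := norm_sub_le (f s) (f (N + s))
    push_cast
    linarith [hf s, hf (N + s)]

lemma avg (f : ℕ → ℂ) (hf : ∀ y, ‖f y‖ ≤ 1) (N q L M : ℕ) (hL : 1 ≤ L) (hN : 1 ≤ N) (hM : 1 ≤ M)
    (h : (N : ℝ) ≤ M * ‖∑ y ∈ range N, f y‖) (hq : 4 * M * q * L ≤ N) :
    ∃ y0 < N, (L : ℝ) ≤ 2 * M * ‖∑ t ∈ range L, f (y0 + q * t)‖ := by
  by_contra hcon
  push Not at hcon
  have hLr : (1 : ℝ) ≤ L := by exact_mod_cast hL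
  have hNr : (1 : ℝ) ≤ N := by exact_mod_cast hN
  have hMr : (1 : ℝ) ≤ M := by exact_mod_cast hM
  have hqr : (4 : ℝ) * M * q * L ≤ N := by exact_mod_cast hq
  set S := ∑ y ∈ range N, f y with hS
  have h1 : (L : ℂ) * S = ∑ t ∈ range L, (S - ∑ y ∈ range N, f (y + q * t))
      + ∑ y ∈ range N, ∑ t ∈ range L, f (y + q * t) := by
    rw [sum_comm, ← sum_add_distrib]
    simp
  have h2 : ‖∑ t ∈ range L, (S - ∑ y ∈ range N, f (y + q * t))‖ ≤ 2 * q * L * L := by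
    refine (norm_sum_le _ _).trans ?_
    calc ∑ t ∈ range L, ‖S - ∑ y ∈ range N, f (y + q * t)‖ ≤ ∑ t ∈ range L, (2 * q * L : ℝ) := by
          refine sum_le_sum fun t ht => ?_
          refine (shift_sum f hf N (q * t)).trans ?_
          push_cast
          have : (t : ℝ) ≤ L := by exact_mod_cast (mem_range.mp ht).le
          rw [mul_assoc]
          gcongr
      _ = _ := by simp; ring
  have h3 : ‖∑ y ∈ range N, ∑ t ∈ range L, f (y + q * t)‖ * (2 * M) < N * L := by
    calc _ ≤ (∑ y ∈ range N, ‖∑ t ∈ range L, f (y + q * t)‖) * (2 * M) := by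
          gcongr; exact norm_sum_le _ _
      _ = ∑ y ∈ range N, 2 * M * ‖∑ t ∈ range L, f (y + q * t)‖ := by
          rw [sum_mul]; exact sum_congr rfl fun _ _ => by ring
      _ < ∑ y ∈ range N, (L : ℝ) := by
          apply sum_lt_sum_of_nonempty (nonempty_range_iff.mpr (by omega))
          intro y hy
          exact hcon y (mem_range.mp hy)
      _ = _ := by simp
  have h4 : (L : ℝ) * ‖S‖ ≤ 2 * q * L * L + ‖∑ y ∈ range N, ∑ t ∈ range L, f (y + q * t)‖ := by
    have : (L : ℝ) * ‖S‖ = ‖(L : ℂ) * S‖ := by simp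
    rw [this, h1]
    exact (norm_add_le _ _).trans (by gcongr)
  set Z := ‖∑ y ∈ range N, ∑ t ∈ range L, f (y + q * t)‖
  have h5 : (L : ℝ) * N ≤ L * (M * ‖S‖) := by gcongr
  have h6 : (M : ℝ) * (L * ‖S‖) ≤ M * (2 * q * L * L + Z) := by gcongr
  have h7 : (4 : ℝ) * M * q * L * L ≤ N * L := by gcongr
  nlinarith

open Polynomial in
lemma trunc_poly (Q : ℝ[X]) (k j : ℕ) (hj : 1 ≤ j) (hjk : j ≤ k) (hQ : Q.natDegree ≤ k) (q y0 : ℝ) :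
    ∃ R : ℝ[X], R.natDegree ≤ j ∧ R.coeff j = q ^ j * Q.coeff j ∧
      ∀ t : ℝ, Q.eval (y0 + q * t) = R.eval t + ∑ i ∈ Ioc j k, Q.coeff i * (y0 + q * t) ^ i := by
  set Ql : ℝ[X] := ∑ i ∈ range (j + 1), monomial i (Q.coeff i) with hQl
  have hdeg : Ql.natDegree ≤ j := by
    apply natDegree_sum_le_of_forall_le
    intro i hi
    exact (natDegree_monomial_le _).trans (by have := mem_range.mp hi; omega)
  have hco : Ql.coeff j = Q.coeff j := by
    rw [hQl, finsetSum_coeff]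
    simp [coeff_monomial]
  obtain ⟨j', rfl⟩ : ∃ j', j = j' + 1 := ⟨j - 1, by omega⟩
  have htop : (taylor y0 Ql).coeff (j' + 1) = Ql.coeff (j' + 1) := by
    have := coeff_eq_zero_of_natDegree_lt (lt_of_le_of_lt (diff_poly Ql j' hdeg y0).1 (Nat.lt_succ_self j'))
    rw [coeff_sub] at this
    exact sub_eq_zero.mp this
  refine ⟨(taylor y0 Ql).comp (C q * X), ?_, ?_, ?_⟩
  · refine natDegree_comp_le.trans ?_
    rw [natDegree_taylor]
    calc _ ≤ (j' + 1) * 1 := Nat.mul_le_mul hdeg ((natDegree_C_mul_le q X).trans natDegree_X_le)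
      _ = _ := by ring
  · rw [comp_C_mul_X_coeff, htop, hco]; ring
  · intro t
    rw [eval_comp, taylor_eval]
    simp only [eval_mul, eval_C, eval_X]
    rw [add_comm y0, hQl, eval_finsetSum]
    simp only [eval_monomial]
    rw [eval_eq_sum_range' (n := k + 1) (by omega), Finset.range_eq_Ico, Finset.range_eq_Ico,
      ← Finset.sum_Ico_consecutive _ (Nat.zero_le (j' + 1 + 1)) (by omega : j' + 1 + 1 ≤ k + 1)]
    congr 1
    refine sum_congr ?_ fun _ _ => rfl
    ext i; simp only [mem_Ico, mem_Ioc]; omega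

open Polynomial in
/-- Inverse Weyl statement for all coefficients of index at least `j`. -/
def TP (k j : ℕ) : Prop := ∃ C : ℕ, ∀ M N : ℕ, 2 ≤ M → 1 ≤ N → ∀ Q : ℝ[X], Q.natDegree ≤ k →
  (N : ℝ) ≤ M * ‖∑ y ∈ range N, ee (Q.eval (y : ℝ))‖ →
  ∃ q : ℕ, 1 ≤ q ∧ q ≤ M ^ C ∧ ∀ i, j ≤ i → ∃ m : ℤ, |q * Q.coeff i - m| ≤ (M : ℝ) ^ C / (N : ℝ) ^ i

lemma TP_top (k : ℕ) : TP k (k + 1) := by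
  refine ⟨0, fun M N hM hN Q hQ h => ⟨1, le_rfl, by simp, fun i hi => ⟨0, ?_⟩⟩⟩
  rw [Polynomial.coeff_eq_zero_of_natDegree_lt (by omega)]
  simp

lemma small_term (k C D M N q L y0 t i : ℕ) (c : ℝ) (m : ℤ) (hM : 2 ≤ M) (hN : 1 ≤ N) (hq1 : 1 ≤ q)
    (hqM : q ≤ M ^ C) (hik : i ≤ k) (hi : 1 ≤ i)
    (hm : |q * c - m| ≤ (M : ℝ) ^ C / (N : ℝ) ^ i) (hLD : M ^ D * L ≤ N) (hqL : q * L ≤ N)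
    (hy : y0 < N) (ht : t < L) (hD : D = 2 * C + 3 * k + 7) :
    ∃ n : ℤ, |c * ((y0 : ℝ) + q * t) ^ i - c * (y0 : ℝ) ^ i - n| ≤ 1 / (M : ℝ) ^ (k + 7) := by
  have hMr : (2 : ℝ) ≤ M := by exact_mod_cast hM
  have hM1 : (1 : ℝ) ≤ M := by linarith
  have hNr : (1 : ℝ) ≤ N := by exact_mod_cast hN
  have hqr : (1 : ℝ) ≤ q := by exact_mod_cast hq1
  obtain ⟨g, hg⟩ : (q : ℤ) ∣ ((y0 : ℤ) + q * t) ^ i - (y0 : ℤ) ^ i := by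
    refine dvd_trans ?_ (sub_dvd_pow_sub_pow _ _ i)
    simp
  have hgr : ((y0 : ℝ) + q * t) ^ i - (y0 : ℝ) ^ i = q * g := by exact_mod_cast hg
  refine ⟨m * g, ?_⟩
  have e1 : c * ((y0 : ℝ) + q * t) ^ i - c * (y0 : ℝ) ^ i - (m * g : ℤ) =
      (q * c - m) * ((((y0 : ℝ) + q * t) ^ i - (y0 : ℝ) ^ i) / q) := by
    rw [← mul_sub, hgr]; push_cast; field_simp
  rw [e1, abs_mul, abs_div, abs_of_pos (by linarith : (0 : ℝ) < q)]
  have h1 := abs_pow_sub_pow_le ((y0 : ℝ) + q * t) (y0 : ℝ) i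
  have h2 : max |(y0 : ℝ) + q * t| |(y0 : ℝ)| ≤ 2 * N := by
    have a1 : (y0 : ℝ) ≤ N := by exact_mod_cast hy.le
    have a2 : (q : ℝ) * t ≤ N := by
      have : q * t ≤ N := le_trans (Nat.mul_le_mul_left _ ht.le) hqL
      exact_mod_cast this
    rw [abs_of_nonneg (by positivity), abs_of_nonneg (by positivity)]
    exact max_le (by linarith) (by linarith)
  have h3 : |(y0 : ℝ) + q * t - y0| = q * t := by
    rw [add_sub_cancel_left, abs_of_nonneg (by positivity)]
  have htL : (t : ℝ) ≤ L := by exact_mod_cast ht.le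
  have hi4 : (i : ℝ) * 2 ^ (i - 1) ≤ M ^ (2 * k) := by
    have b1 : (i : ℝ) ≤ M ^ i := by
      have : i ≤ M ^ i := (Nat.lt_pow_self (by omega)).le
      exact_mod_cast this
    calc (i : ℝ) * 2 ^ (i - 1) ≤ (M : ℝ) ^ i * M ^ (i - 1) := by gcongr
      _ = (M : ℝ) ^ (i + (i - 1)) := by rw [pow_add]
      _ ≤ _ := pow_le_pow_right₀ hM1 (by omega)
  have h4 : |((y0 : ℝ) + q * t) ^ i - (y0 : ℝ) ^ i| ≤ q * L * M ^ (2 * k) * N ^ (i - 1) := by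
    calc _ ≤ _ := h1
      _ ≤ (q * t) * i * (2 * N) ^ (i - 1) := by
        rw [h3]; gcongr
      _ ≤ (q * L) * i * (2 * N) ^ (i - 1) := by gcongr
      _ = q * L * (i * 2 ^ (i - 1)) * N ^ (i - 1) := by rw [mul_pow]; ring
      _ ≤ _ := by gcongr
  have hLDr : (M : ℝ) ^ D * L ≤ N := by exact_mod_cast hLD
  have hNi : (N : ℝ) ^ i = N ^ (i - 1) * N := by rw [← pow_succ]; congr 1; omega
  calc |(q : ℝ) * c - m| * (|((y0 : ℝ) + q * t) ^ i - (y0 : ℝ) ^ i| / q)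
      ≤ ((M : ℝ) ^ C / (N : ℝ) ^ i) * (q * L * M ^ (2 * k) * N ^ (i - 1) / q) := by gcongr
    _ = (M : ℝ) ^ (C + 2 * k) * L / N := by
        rw [hNi, pow_add]; field_simp
    _ ≤ 1 / (M : ℝ) ^ (k + 7) := by
        rw [div_le_div_iff₀ (by linarith) (by positivity)]
        calc (M : ℝ) ^ (C + 2 * k) * L * M ^ (k + 7) = (M : ℝ) ^ (C + 2 * k + (k + 7)) * L := by
              rw [pow_add _ (C + 2 * k)]; ring
          _ ≤ (M : ℝ) ^ D * L := by
              gcongr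
              omega
          _ ≤ 1 * N := by linarith

lemma exists_int_sum {ι : Type*} (s : Finset ι) (g : ι → ℝ) (η : ℝ)
    (h : ∀ i ∈ s, ∃ n : ℤ, |g i - n| ≤ η) : ∃ n : ℤ, |∑ i ∈ s, g i - n| ≤ s.card * η := by
  classical
  induction s using Finset.induction_on with
  | empty => exact ⟨0, by simp⟩
  | insert a s ha ih =>
    obtain ⟨n1, h1⟩ := ih fun i hi => h i (mem_insert_of_mem hi)
    obtain ⟨n2, h2⟩ := h a (mem_insert_self a s)
    refine ⟨n2 + n1, ?_⟩
    rw [sum_insert ha, card_insert_of_notMem ha]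
    push_cast
    have : g a + ∑ i ∈ s, g i - (n2 + n1) = (g a - n2) + (∑ i ∈ s, g i - n1) := by ring
    rw [this]
    refine (abs_add_le _ _).trans ?_
    linarith

lemma TP_step (k j : ℕ) (hj : 1 ≤ j) (hjk : j ≤ k) (ih : TP k (j + 1)) : TP k j := by
  obtain ⟨C, hC⟩ := ih
  obtain ⟨Cj, hCj⟩ := LP_all j hj
  obtain ⟨D, hD⟩ : ∃ D, D = 2 * C + 3 * k + 7 := ⟨_, rfl⟩
  refine ⟨(D + 1) * k + 3 * Cj + (D + 1) * j + C * j, fun M N hM hN Q hQ h => ?_⟩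
  set K := (D + 1) * k + 3 * Cj + (D + 1) * j + C * j with hK
  have hMr : (2 : ℝ) ≤ M := by exact_mod_cast hM
  have hM1 : (1 : ℝ) ≤ M := by linarith
  have hNr : (1 : ℝ) ≤ N := by exact_mod_cast hN
  rcases Nat.lt_or_ge N (M ^ (D + 1)) with hNE | hNE
  · refine ⟨1, le_rfl, Nat.one_le_pow _ _ (by omega), fun i _ => ?_⟩
    rcases Nat.lt_or_ge k i with hik | hik
    · refine ⟨0, ?_⟩
      rw [Polynomial.coeff_eq_zero_of_natDegree_lt (by omega)]
      simp; positivity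
    · refine ⟨round (Q.coeff i), ?_⟩
      rw [Nat.cast_one, one_mul]
      refine trivial_bound _ M N (D + 1) i K hM hN hNE.le ?_
      have : (D + 1) * i ≤ (D + 1) * k := Nat.mul_le_mul_left _ hik
      omega
  obtain ⟨q, hq1, hq2, hqm⟩ := hC M N hM hN Q hQ h
  set L := N / M ^ D with hL
  have hMD : 0 < M ^ D := by positivity
  have hL1 : 1 ≤ L := by
    rw [hL, Nat.one_le_div_iff hMD]
    exact (Nat.pow_le_pow_right (by omega) (by omega)).trans hNE
  have hLD : M ^ D * L ≤ N := Nat.mul_div_le _ _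
  have hNL : N ≤ M ^ (D + 1) * L := by
    have h1 := Nat.lt_mul_div_succ N hMD
    rw [← hL] at h1
    calc N ≤ M ^ D * (L + 1) := h1.le
      _ ≤ M ^ D * (M * L) := by gcongr; nlinarith
      _ = _ := by ring
  have h4q : 4 * M * q * L ≤ N := by
    refine le_trans ?_ hLD
    gcongr
    calc 4 * M * q ≤ M ^ 2 * M * M ^ C := by gcongr; nlinarith
      _ = M ^ (3 + C) := by ring
      _ ≤ _ := Nat.pow_le_pow_right (by omega) (by omega)
  have hqL : q * L ≤ N := by nlinarith [Nat.zero_le (q * L)]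
  obtain ⟨y0, hy0, hsum⟩ := avg (fun y => ee (Q.eval (y : ℝ))) (fun y => (norm_ee _).le) N q L M hL1 hN
    (by omega) h h4q
  obtain ⟨R, hRd, hRc, hRe⟩ := trunc_poly Q k j hj hjk hQ q y0
  set c0 : ℝ := ∑ i ∈ Ioc j k, Q.coeff i * (y0 : ℝ) ^ i with hc0
  have happ : ∀ t < L, ‖ee (Q.eval ((y0 + q * t : ℕ) : ℝ)) - ee (R.eval (t : ℝ) + c0)‖ ≤ 1 / (4 * M) := by
    intro t ht
    obtain ⟨n, hn⟩ := exists_int_sum (Ioc j k)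
      (fun i => Q.coeff i * ((y0 : ℝ) + q * t) ^ i - Q.coeff i * (y0 : ℝ) ^ i) (1 / (M : ℝ) ^ (k + 7)) (by
        intro i hi
        rw [mem_Ioc] at hi
        obtain ⟨m, hm⟩ := hqm i hi.1
        exact small_term k C D M N q L y0 t i (Q.coeff i) m hM hN hq1 hq2 hi.2 (by omega) hm hLD hqL hy0 ht hD)
    have e1 : ee (R.eval (t : ℝ) + c0) = ee (R.eval (t : ℝ) + c0 + n) := (ee_add_int _ _).symm
    rw [e1]
    refine (norm_ee_sub_le _ _).trans ?_
    have e2 : Q.eval ((y0 + q * t : ℕ) : ℝ) - (R.eval (t : ℝ) + c0 + n) =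
        ∑ i ∈ Ioc j k, (Q.coeff i * ((y0 : ℝ) + q * t) ^ i - Q.coeff i * (y0 : ℝ) ^ i) - n := by
      push_cast
      rw [hRe, sum_sub_distrib]; ring
    rw [e2]
    have hkM : ((Ioc j k).card : ℝ) ≤ M ^ k := by
      rw [Nat.card_Ioc]
      have : k - j ≤ M ^ k := le_trans (Nat.sub_le _ _) (Nat.lt_pow_self (by omega)).le
      exact_mod_cast this
    calc 2 * π * _ ≤ 2 * π * (((Ioc j k).card : ℝ) * (1 / (M : ℝ) ^ (k + 7))) := by gcongr
      _ ≤ 2 * π * (M ^ k * (1 / (M : ℝ) ^ (k + 7))) := by gcongr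
      _ = 2 * π / M ^ 7 := by rw [pow_add]; field_simp
      _ ≤ 1 / (4 * M) := by
        rw [div_le_div_iff₀ (by positivity) (by positivity)]
        have h6 : (2 : ℝ) ^ 6 ≤ M ^ 6 := by gcongr
        have : (M : ℝ) ^ 7 = M ^ 6 * M := by ring
        rw [this]
        nlinarith [Real.pi_lt_four]
  have hR : (L : ℝ) ≤ (M ^ 3 : ℕ) * ‖∑ t ∈ range L, ee (R.eval (t : ℝ))‖ := by
    have e1 : ‖∑ t ∈ range L, ee (R.eval (t : ℝ) + c0)‖ = ‖∑ t ∈ range L, ee (R.eval (t : ℝ))‖ := by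
      simp only [ee_add]
      rw [← sum_mul, norm_mul, norm_ee, mul_one]
    have e2 : ‖∑ t ∈ range L, ee (Q.eval ((y0 + q * t : ℕ) : ℝ))‖ ≤
        ‖∑ t ∈ range L, ee (R.eval (t : ℝ) + c0)‖ + L * (1 / (4 * M)) := by
      have e3 : ∑ t ∈ range L, ee (Q.eval ((y0 + q * t : ℕ) : ℝ)) = ∑ t ∈ range L, ee (R.eval (t : ℝ) + c0)
          + ∑ t ∈ range L, (ee (Q.eval ((y0 + q * t : ℕ) : ℝ)) - ee (R.eval (t : ℝ) + c0)) := by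
        rw [sum_sub_distrib]; ring
      rw [e3]
      refine (norm_add_le _ _).trans ?_
      gcongr
      refine (norm_sum_le _ _).trans ?_
      calc _ ≤ ∑ t ∈ range L, (1 / (4 * M) : ℝ) := sum_le_sum fun t ht => happ t (mem_range.mp ht)
        _ = _ := by simp
    rw [e1] at e2
    set Z := ‖∑ t ∈ range L, ee (R.eval (t : ℝ))‖
    have hZ : 0 ≤ Z := norm_nonneg _
    have e4 : (L : ℝ) ≤ 2 * M * (Z + L * (1 / (4 * M))) := hsum.trans (by gcongr)
    have e5 : 2 * M * (Z + L * (1 / (4 * M))) = 2 * M * Z + (L : ℝ) / 2 := by field_simp; ring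
    have e6 : (L : ℝ) ≤ 4 * M * Z := by linarith
    refine e6.trans ?_
    push_cast
    gcongr
    nlinarith [mul_nonneg (by linarith : (0 : ℝ) ≤ M) (by nlinarith : (0 : ℝ) ≤ M ^ 2 - 4)]
  obtain ⟨q', hq'1, hq'2, m, hm⟩ := hCj (M ^ 3) L (by nlinarith [Nat.pow_le_pow_left hM 3]) hL1 R hRd hR
  rw [← pow_mul] at hq'2
  have hqr : (q : ℝ) ≤ M ^ C := by exact_mod_cast hq2
  have hq'r : (q' : ℝ) ≤ M ^ (3 * Cj) := by exact_mod_cast hq'2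
  have hLr : (1 : ℝ) ≤ L := by exact_mod_cast hL1
  refine ⟨q' * q ^ j, ?_, ?_, ?_⟩
  · have : 0 < q' * q ^ j := by positivity
    omega
  · calc q' * q ^ j ≤ M ^ (3 * Cj) * (M ^ C) ^ j := by gcongr
      _ = M ^ (3 * Cj + C * j) := by rw [← pow_mul, ← pow_add]
      _ ≤ _ := Nat.pow_le_pow_right (by omega) (by omega)
  · intro i hi
    rcases hi.eq_or_lt with rfl | hi
    · refine ⟨m, ?_⟩
      rw [hRc] at hm
      have e1 : ((q' * q ^ j : ℕ) : ℝ) * Q.coeff j = q' * (q ^ j * Q.coeff j) := by push_cast; ring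
      rw [e1]
      refine hm.trans ?_
      push_cast
      rw [div_le_div_iff₀ (by positivity) (by positivity), ← pow_mul]
      have hNLr : (N : ℝ) ≤ M ^ (D + 1) * L := by exact_mod_cast hNL
      calc (M : ℝ) ^ (3 * Cj) * N ^ j ≤ (M : ℝ) ^ (3 * Cj) * (M ^ (D + 1) * L) ^ j := by gcongr
        _ = (M : ℝ) ^ (3 * Cj + (D + 1) * j) * L ^ j := by ring
        _ ≤ _ := by
          gcongr
          omega
    · obtain ⟨m', hm'⟩ := hqm i hi
      refine ⟨q' * q ^ (j - 1) * m', ?_⟩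
      have hqj : (q : ℝ) ^ j = q ^ (j - 1) * q := by rw [← pow_succ]; congr 1; omega
      have e1 : ((q' * q ^ j : ℕ) : ℝ) * Q.coeff i - ((q' * q ^ (j - 1) * m' : ℤ) : ℝ) =
          (q' * q ^ (j - 1)) * (q * Q.coeff i - m') := by push_cast; rw [hqj]; ring
      rw [e1, abs_mul, abs_of_nonneg (by positivity)]
      calc (q' : ℝ) * q ^ (j - 1) * |q * Q.coeff i - m'| ≤
            (M : ℝ) ^ (3 * Cj) * (M ^ C) ^ (j - 1) * ((M : ℝ) ^ C / (N : ℝ) ^ i) := by gcongr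
        _ = (M : ℝ) ^ (3 * Cj + C * (j - 1) + C) / (N : ℝ) ^ i := by
          rw [← pow_mul, pow_add, pow_add]; ring
        _ ≤ _ := by
          gcongr
          have : C * (j - 1) + C = C * j := by
              obtain ⟨j', rfl⟩ : ∃ j', j = j' + 1 := ⟨j - 1, by omega⟩
              simp; ring
          omega

lemma TP_all (k s : ℕ) (hs : s ≤ k) : TP k (k + 1 - s) := by
  induction s with
  | zero => exact TP_top k
  | succ s ih =>
    have h1 := ih (by omega)
    have h2 : k + 1 - s = (k + 1 - (s + 1)) + 1 := by omega
    rw [h2] at h1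
    exact TP_step k _ (by omega) (by omega) h1

lemma TP_one (k : ℕ) : TP k 1 := by
  have := TP_all k k le_rfl
  simpa using this

end WeylAux

namespace WeylAux

/-- Unnormalised Fejér kernel. -/
noncomputable def FK (H : ℕ) (u : ℝ) : ℝ := ‖∑ m ∈ range H, ee (u * m)‖ ^ 2

lemma FK_nonneg (H : ℕ) (u : ℝ) : 0 ≤ FK H u := by unfold FK; positivity

lemma FK_eq (H : ℕ) (u : ℝ) :
    (FK H u : ℂ) = ∑ m ∈ range H, ∑ n ∈ range H, ee (((m : ℝ) - n) * u) := by
  unfold FK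
  push_cast
  rw [← Complex.mul_conj', map_sum, sum_mul_sum]
  refine sum_congr rfl fun m _ => sum_congr rfl fun n _ => ?_
  rw [ee_conj, ← ee_add]; congr 1; ring

lemma orth (H : ℕ) (m n : ℕ) (hm : m < H) (hn : n < H) (hmn : m ≠ n) (c : ℝ) :
    ∑ j ∈ range H, ee (((m : ℝ) - n) * (c - j / H)) = 0 := by
  have hH : (0 : ℝ) < H := by exact_mod_cast (by omega : 0 < H)
  set w : ℝ := ((n : ℝ) - m) / H with hw
  have h1 : ∑ j ∈ range H, ee (((m : ℝ) - n) * (c - j / H)) =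
      ee (((m : ℝ) - n) * c) * ∑ j ∈ range H, ee w ^ j := by
    rw [mul_sum]
    refine sum_congr rfl fun j _ => ?_
    rw [← ee_nat_mul, ← ee_add]; congr 1; rw [hw]; ring
  rw [h1]
  have h2 : (∑ j ∈ range H, ee w ^ j) * (ee w - 1) = 0 := by
    rw [geom_sum_mul, ← ee_nat_mul, hw]
    have : (H : ℝ) * (((n : ℝ) - m) / H) = ((n - m : ℤ) : ℝ) := by push_cast; field_simp
    rw [this, ee_int, sub_self]
  have h3 : ee w - 1 ≠ 0 := by
    intro h0
    have h4 : ee w = 1 := sub_eq_zero.mp h0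
    unfold ee at h4
    rw [Complex.exp_eq_one_iff] at h4
    obtain ⟨z, hz⟩ := h4
    have h5 : w = z := by
      have hpi : (2 * (π : ℂ) * Complex.I) ≠ 0 := Complex.two_pi_I_ne_zero
      have : (w : ℂ) = z := by
        apply mul_right_cancel₀ hpi
        rw [← hz]; push_cast; ring
      exact_mod_cast this
    have h6 : (n : ℝ) - m = z * H := by rw [← h5, hw]; field_simp
    have h7 : (n : ℤ) - m = z * H := by exact_mod_cast h6
    have hz0 : z ≠ 0 := by
      rintro rfl
      apply hmn; omega
    have : (H : ℤ) ≤ |(n : ℤ) - m| := by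
      rw [h7, abs_mul]
      have : 1 ≤ |z| := Int.one_le_abs hz0
      simp
      nlinarith
    have h8 : |(n : ℤ) - m| < H := by rw [abs_lt]; constructor <;> omega
    omega
  rcases mul_eq_zero.mp h2 with h | h
  · rw [h, mul_zero]
  · exact absurd h h3

lemma FK_sum (H : ℕ) (c : ℝ) : ∑ j ∈ range H, FK H (c - j / H) = (H : ℝ) ^ 2 := by
  have : ((∑ j ∈ range H, FK H (c - j / H) : ℝ) : ℂ) = ((H : ℝ) ^ 2 : ℝ) := by
    push_cast
    simp only [FK_eq]
    rw [sum_comm]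
    have h1 : ∀ m ∈ range H, ∑ j ∈ range H, ∑ n ∈ range H, ee (((m : ℝ) - n) * (c - j / H)) = (H : ℂ) := by
      intro m hm
      rw [sum_comm, sum_eq_single m]
      · simp [ee_zero]
      · intro n hn hne
        exact orth H m n (mem_range.mp hm) (mem_range.mp hn) hne.symm c
      · intro h; exact absurd hm h
    rw [sum_congr rfl h1]
    simp; ring
  exact_mod_cast this

lemma FK_int (H : ℕ) (u : ℝ) (n : ℤ) : FK H (u + n) = FK H u := by
  unfold FK
  congr 2
  refine sum_congr rfl fun m _ => ?_
  have : (u + n) * m = u * m + ((n * m : ℤ) : ℝ) := by push_cast; ring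
  rw [this, ee_add_int]

lemma FK_neg (H : ℕ) (u : ℝ) : FK H (-u) = FK H u := by
  unfold FK
  congr 1
  rw [← Complex.norm_conj, map_sum]
  congr 1
  refine sum_congr rfl fun m _ => ?_
  rw [ee_conj]; congr 1; ring

lemma FK_small (H : ℕ) (s u : ℝ) (n : ℤ) (hs : 0 < s) (h1 : s ≤ n - u) (h2 : n - u ≤ 1 - s) :
    FK H u ≤ 1 / (4 * s ^ 2) := by
  have e : FK H u = FK H (n - u) := by
    rw [← FK_neg, ← FK_int H (-u) n]; congr 1; ring
  rw [e]
  unfold FK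
  have := geom_le_of_dist s (n - u) H hs h1 h2
  calc _ ≤ (1 / (2 * s)) ^ 2 := by gcongr
    _ = _ := by field_simp; ring

lemma FK_weyl (g : ℕ → ℝ) (Y H : ℕ) (δ p : ℝ) (hδ : 0 ≤ δ)
    (hW : ∀ h : ℕ, 1 ≤ h → h < H → ‖∑ y ∈ range Y, ee (h * g y)‖ ≤ δ) :
    ∑ y ∈ range Y, FK H (g y - p) ≤ H * Y + H ^ 2 * δ := by
  have h1 : ((∑ y ∈ range Y, FK H (g y - p) : ℝ) : ℂ) =
      ∑ m ∈ range H, ∑ n ∈ range H, ee (-(((m : ℝ) - n) * p)) * ∑ y ∈ range Y, ee (((m : ℝ) - n) * g y) := by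
    push_cast
    simp only [FK_eq]
    rw [sum_comm]
    refine sum_congr rfl fun m _ => ?_
    rw [sum_comm]
    refine sum_congr rfl fun n _ => ?_
    rw [mul_sum]
    refine sum_congr rfl fun y _ => ?_
    rw [← ee_add]; congr 1; ring
  have h2 : ∀ m ∈ range H, ∀ n ∈ range H, ‖∑ y ∈ range Y, ee (((m : ℝ) - n) * g y)‖ ≤
      (if m = n then (Y : ℝ) else 0) + δ := by
    intro m hm n hn
    have hm := mem_range.mp hm
    have hn := mem_range.mp hn
    split_ifs with hmn
    · subst hmn
      simp [ee_zero, hδ]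
    · rw [zero_add]
      rcases lt_or_gt_of_ne hmn with h | h
      · have := hW (n - m) (by omega) (by omega)
        rw [Nat.cast_sub h.le, ← Complex.norm_conj, map_sum] at this
        refine le_of_eq_of_le ?_ this
        congr 1
        refine sum_congr rfl fun y _ => ?_
        rw [ee_conj]; congr 1; ring
      · have := hW (m - n) (by omega) (by omega)
        rwa [Nat.cast_sub h.le] at this
  have h3 : ∑ y ∈ range Y, FK H (g y - p) ≤ ‖((∑ y ∈ range Y, FK H (g y - p) : ℝ) : ℂ)‖ := by
    rw [Complex.norm_real]; exact le_abs_self _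
  refine h3.trans ?_
  rw [h1]
  calc _ ≤ ∑ m ∈ range H, ∑ n ∈ range H, ((if m = n then (Y : ℝ) else 0) + δ) := by
        refine (norm_sum_le _ _).trans (sum_le_sum fun m hm => ?_)
        refine (norm_sum_le _ _).trans (sum_le_sum fun n hn => ?_)
        rw [norm_mul, norm_ee, one_mul]
        exact h2 m hm n hn
    _ = ∑ m ∈ range H, ((Y : ℝ) + H * δ) := by
        refine sum_congr rfl fun m hm => ?_
        rw [sum_add_distrib, sum_ite_eq, if_pos hm]; simp
    _ = _ := by simp; ring

lemma fejer_upper (g : ℕ → ℝ) (Y H : ℕ) (hH : 1 ≤ H) (a l s δ : ℝ) (hs : 0 < s) (hl : 0 ≤ l) (hδ : 0 ≤ δ)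
    (hW : ∀ h : ℕ, 1 ≤ h → h < H → ‖∑ y ∈ range Y, ee (h * g y)‖ ≤ δ) (T : Finset ℕ) (hTY : T ⊆ range Y)
    (hT : ∀ y ∈ T, ∃ n : ℤ, a ≤ g y - n ∧ g y - n ≤ a + l) :
    (T.card : ℝ) ≤ Y * (l + 2 * s + 1 / H + 1 / (4 * H * s ^ 2)) + H * δ := by
  classical
  have hHr : (1 : ℝ) ≤ H := by exact_mod_cast hH
  set J := (range H).filter (fun j : ℕ => (j : ℝ) / H ≤ l + 2 * s) with hJ
  have hJc : (J.card : ℝ) ≤ H * (l + 2 * s) + 1 := by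
    have : J ⊆ range (⌊H * (l + 2 * s)⌋₊ + 1) := by
      intro j hj
      rw [hJ, mem_filter] at hj
      rw [mem_range, Nat.lt_succ_iff]
      apply Nat.le_floor
      have := hj.2
      rw [div_le_iff₀ (by linarith)] at this
      linarith
    have h2 := card_le_card this
    rw [card_range] at h2
    have h3 : (J.card : ℝ) ≤ (⌊H * (l + 2 * s)⌋₊ : ℝ) + 1 := by exact_mod_cast h2
    have := Nat.floor_le (show 0 ≤ H * (l + 2 * s) by positivity)
    linarith
  have hJH : (J.card : ℝ) ≤ H := by
    have := card_le_card (filter_subset (fun j : ℕ => (j : ℝ) / H ≤ l + 2 * s) (range H))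
    rw [card_range] at this
    exact_mod_cast this
  have key : ∀ y ∈ T, (H : ℝ) ^ 2 - H * (1 / (4 * s ^ 2)) ≤ ∑ j ∈ J, FK H (g y - (a - s + j / H)) := by
    intro y hy
    obtain ⟨n, hn1, hn2⟩ := hT y hy
    have h1 := FK_sum H (g y - (a - s))
    rw [← sum_filter_add_sum_filter_not _ (fun j : ℕ => (j : ℝ) / H ≤ l + 2 * s)] at h1
    have h2 : ∑ j ∈ (range H).filter (fun j : ℕ => ¬ (j : ℝ) / H ≤ l + 2 * s), FK H (g y - (a - s) - j / H)
        ≤ H * (1 / (4 * s ^ 2)) := by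
      calc _ ≤ ∑ j ∈ (range H).filter (fun j : ℕ => ¬ (j : ℝ) / H ≤ l + 2 * s), 1 / (4 * s ^ 2) := by
            refine sum_le_sum fun j hj => ?_
            rw [mem_filter, mem_range] at hj
            have hj2 := hj.2
            push Not at hj2
            have hj1 : (j : ℝ) / H < 1 := by
              rw [div_lt_one (by linarith)]; exact_mod_cast hj.1
            apply FK_small H s _ n hs <;> linarith
        _ ≤ _ := by
            rw [sum_const, nsmul_eq_mul]
            gcongr
            exact_mod_cast (card_filter_le _ _).trans (card_range H).le
    have h3 : ∑ j ∈ J, FK H (g y - (a - s + j / H)) = ∑ j ∈ J, FK H (g y - (a - s) - j / H) :=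
      sum_congr rfl fun j _ => by congr 1; ring
    rw [h3]
    linarith
  have h1 : (T.card : ℝ) * ((H : ℝ) ^ 2 - H * (1 / (4 * s ^ 2))) ≤
      ∑ y ∈ T, ∑ j ∈ J, FK H (g y - (a - s + j / H)) := by
    rw [← nsmul_eq_mul, ← sum_const]
    exact sum_le_sum key
  have h2 : ∑ y ∈ T, ∑ j ∈ J, FK H (g y - (a - s + j / H)) ≤
      ∑ y ∈ range Y, ∑ j ∈ J, FK H (g y - (a - s + j / H)) :=
    sum_le_sum_of_subset_of_nonneg hTY fun _ _ _ => sum_nonneg fun _ _ => FK_nonneg _ _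
  rw [sum_comm (s := range Y)] at h2
  have h3 : ∑ j ∈ J, ∑ y ∈ range Y, FK H (g y - (a - s + j / H)) ≤ J.card * (H * Y + H ^ 2 * δ) := by
    rw [← nsmul_eq_mul, ← sum_const]
    exact sum_le_sum fun j _ => FK_weyl g Y H δ _ hδ hW
  have h4 : (J.card : ℝ) * (H * Y + H ^ 2 * δ) ≤ (H * (l + 2 * s) + 1) * (H * Y) + H * (H ^ 2 * δ) := by
    rw [mul_add]; gcongr
  have hTc : (T.card : ℝ) ≤ Y := by
    have := card_le_card hTY
    rw [card_range] at this
    exact_mod_cast this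
  have h5 : (T.card : ℝ) * (H * (1 / (4 * s ^ 2))) ≤ Y * (H * (1 / (4 * s ^ 2))) := by gcongr
  have h6 : (T.card : ℝ) * H ^ 2 ≤ (Y * (l + 2 * s + 1 / H + 1 / (4 * H * s ^ 2)) + H * δ) * H ^ 2 := by
    have : (Y * (l + 2 * s + 1 / H + 1 / (4 * H * s ^ 2)) + H * δ) * (H : ℝ) ^ 2 =
        (H * (l + 2 * s) + 1) * (H * Y) + H * (H ^ 2 * δ) + Y * (H * (1 / (4 * s ^ 2))) := by
      field_simp
      ring
    rw [this]
    linarith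
  exact le_of_mul_le_mul_right h6 (by positivity)

/-- Convenient form: `H = B³`, `s = 1/B`, `δ = Y/B⁴`. -/
lemma fejer_B (g : ℕ → ℝ) (Y B : ℕ) (hB : 1 ≤ B) (a l : ℝ) (hl : 0 ≤ l)
    (hW : ∀ h : ℕ, 1 ≤ h → h < B ^ 3 → ‖∑ y ∈ range Y, ee (h * g y)‖ ≤ Y / (B : ℝ) ^ 4)
    (T : Finset ℕ) (hTY : T ⊆ range Y)
    (hT : ∀ y ∈ T, ∃ n : ℤ, a ≤ g y - n ∧ g y - n ≤ a + l) :
    (T.card : ℝ) ≤ Y * (l + 5 / B) := by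
  have hBr : (1 : ℝ) ≤ B := by exact_mod_cast hB
  have h := fejer_upper g Y (B ^ 3) (Nat.one_le_pow _ _ hB) a l (1 / B) (Y / (B : ℝ) ^ 4) (by positivity) hl
    (by positivity) hW T hTY hT
  refine h.trans ?_
  have e : (Y : ℝ) * (l + 2 * (1 / B) + 1 / (B ^ 3 : ℕ) + 1 / (4 * (B ^ 3 : ℕ) * (1 / (B : ℝ)) ^ 2))
      + (B ^ 3 : ℕ) * (Y / (B : ℝ) ^ 4) = Y * (l + (13 / 4 + 1 / B ^ 2) / B) := by
    push_cast; field_simp; ring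
  rw [e]
  gcongr
  have : 1 / (B : ℝ) ^ 2 ≤ 1 := by
    rw [div_le_one (by positivity)]; nlinarith
  linarith

end WeylAux

namespace WeylAux

lemma nonliou (α : ℝ) (h : ¬ IsLiouvilleNumber α) :
    ∃ n0 : ℕ, ∀ (m : ℤ) (q : ℕ), 1 ≤ q → 1 < |q * α - m| * (2 * q) ^ n0 := by
  unfold IsLiouvilleNumber at h
  push Not at h
  obtain ⟨n0, hn⟩ := h
  refine ⟨n0, fun m q hq => ?_⟩
  have h1 := hn (2 * m) (2 * q) (by omega)
  have hq' : (1 : ℝ) ≤ q := by exact_mod_cast hq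
  have hpos : (0 : ℝ) < (2 * q : ℝ) ^ n0 := by positivity
  push_cast at h1
  rw [zpow_neg, zpow_natCast] at h1
  have e : α - 2 * (m : ℝ) / (2 * q) = (q * α - m) / q := by field_simp
  rw [e, abs_div, Nat.abs_cast] at h1
  rw [inv_lt_iff_one_lt_mul₀ hpos] at h1
  have : |q * α - m| / q ≤ |q * α - m| := div_le_self (abs_nonneg _) hq'
  nlinarith

/-- Equidistribution of `P(dy)/d`. -/
lemma weyl_small (P : Polynomial ℝ) (hP : ¬ IsLiouvilleNumber (P.coeff 1)) :
    ∃ C2 : ℕ, ∀ B d N : ℕ, 2 ≤ B → 1 ≤ d → B ^ C2 ≤ N → ∀ h : ℕ, 1 ≤ h → h < B ^ 3 →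
      ‖∑ y ∈ range N, ee (h * (P.eval ((d : ℝ) * y) / d))‖ ≤ N / (B : ℝ) ^ 4 := by
  obtain ⟨n0, hn0⟩ := nonliou _ hP
  obtain ⟨C, hC⟩ := TP_one P.natDegree
  refine ⟨4 * C + (4 * C + 4) * n0, fun B d N hB hd hN h h1 h2 => ?_⟩
  by_contra hcon
  push Not at hcon
  have hB0 : (2 : ℝ) ≤ B := by exact_mod_cast hB
  have hd0 : (1 : ℝ) ≤ d := by exact_mod_cast hd
  have hN1 : 1 ≤ N := le_trans (Nat.one_le_pow _ _ (by omega)) hN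
  have hN0 : (1 : ℝ) ≤ N := by exact_mod_cast hN1
  have hM : 2 ≤ B ^ 4 := le_trans hB (Nat.le_self_pow (by norm_num) B)
  set Q : Polynomial ℝ := Polynomial.C ((h : ℝ) / d) * P.comp (Polynomial.C (d : ℝ) * Polynomial.X) with hQ
  have hdeg : Q.natDegree ≤ P.natDegree := by
    refine (Polynomial.natDegree_C_mul_le _ _).trans ?_
    refine Polynomial.natDegree_comp_le.trans ?_
    have : (Polynomial.C (d : ℝ) * Polynomial.X).natDegree ≤ 1 := by compute_degree
    nlinarith
  have hev : ∀ y : ℕ, Q.eval (y : ℝ) = h * (P.eval ((d : ℝ) * y) / d) := by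
    intro y
    simp [hQ]; ring
  have hco : Q.coeff 1 = h * P.coeff 1 := by
    rw [hQ, Polynomial.coeff_C_mul, Polynomial.comp_C_mul_X_coeff]
    field_simp
  obtain ⟨q, hq1, hq2, hq3⟩ := hC (B ^ 4) N hM hN1 Q hdeg (by
    simp only [hev]
    rw [div_lt_iff₀ (by positivity)] at hcon
    push_cast
    linarith)
  obtain ⟨m, hm⟩ := hq3 1 le_rfl
  rw [hco, pow_one] at hm
  have h3 := hn0 m (q * h) (Nat.mul_pos hq1 h1)
  push_cast at h3 hm
  rw [← mul_assoc] at hm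
  have h4 : 2 * (q * h) ≤ B ^ (4 * C + 4) := by
    calc 2 * (q * h) ≤ B * ((B ^ 4) ^ C * B ^ 3) := by gcongr
      _ = _ := by ring
  have h5 : (2 * ((q : ℝ) * h)) ≤ (B : ℝ) ^ (4 * C + 4) := by exact_mod_cast h4
  have h6 : (2 * ((q : ℝ) * h)) ^ n0 ≤ (B : ℝ) ^ ((4 * C + 4) * n0) := by
    rw [pow_mul]; gcongr
  have h7 : |(q : ℝ) * h * P.coeff 1 - m| * (2 * ((q : ℝ) * h)) ^ n0 ≤
      ((B : ℝ) ^ 4) ^ C / N * (B : ℝ) ^ ((4 * C + 4) * n0) := by gcongr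
  have h8 : ((B : ℝ) ^ 4) ^ C / N * (B : ℝ) ^ ((4 * C + 4) * n0) ≤ 1 := by
    rw [div_mul_eq_mul_div, div_le_one (by positivity), ← pow_mul, ← pow_add]
    exact_mod_cast hN
  linarith

lemma dvd_floor_iff (x : ℝ) (d : ℕ) (hd : 1 ≤ d) :
    (d : ℤ) ∣ ⌊x⌋ ↔ Int.fract (x / d) < 1 / d := by
  have hd0 : (0 : ℝ) < d := by exact_mod_cast hd
  constructor
  · rintro ⟨n, hn⟩
    have h1 := Int.floor_le x
    have h2 := Int.lt_floor_add_one x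
    rw [hn] at h1 h2
    push_cast at h1 h2
    have h3 : ⌊x / d⌋ = n := by
      rw [Int.floor_eq_iff]
      have hd1 : (1 : ℝ) ≤ d := by exact_mod_cast hd
      constructor
      · rw [le_div_iff₀ hd0]; linarith
      · rw [div_lt_iff₀ hd0]; nlinarith
    rw [Int.fract, h3, lt_div_iff₀ hd0, sub_mul, div_mul_cancel₀ _ hd0.ne']
    linarith
  · intro h
    refine ⟨⌊x / d⌋, ?_⟩
    rw [Int.floor_eq_iff]
    have h1 := Int.fract_nonneg (x / d)
    rw [Int.fract] at h1 h
    rw [lt_div_iff₀ hd0, sub_mul, div_mul_cancel₀ _ hd0.ne'] at h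
    have : (⌊x / d⌋ : ℝ) ≤ x / d := by linarith
    rw [le_div_iff₀ hd0] at this
    push_cast
    constructor <;> linarith

open Classical in
lemma equi (P : Polynomial ℝ) (hP : ¬ IsLiouvilleNumber (P.coeff 1)) :
    ∃ C2 : ℕ, ∀ B d N : ℕ, 2 ≤ B → 1 ≤ d → B ^ C2 ≤ N →
      |(((range N).filter fun y : ℕ => (d : ℤ) ∣ ⌊P.eval ((d : ℝ) * y)⌋).card : ℝ) - N / d|
        ≤ 5 * N / B := by
  obtain ⟨C2, hC⟩ := weyl_small P hP
  refine ⟨C2, fun B d N hB hd hN => ?_⟩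
  have hW := hC B d N hB hd hN
  have hd0 : (1 : ℝ) ≤ d := by exact_mod_cast hd
  set g : ℕ → ℝ := fun y => P.eval ((d : ℝ) * y) / d with hg
  have hdi : 1 / (d : ℝ) ≤ 1 := by rw [div_le_one (by positivity)]; exact hd0
  have hu := fejer_B g N B (by omega) 0 (1 / d) (by positivity) hW
    ((range N).filter fun y : ℕ => (d : ℤ) ∣ ⌊P.eval ((d : ℝ) * y)⌋) (filter_subset _ _) (by
      intro y hy
      rw [mem_filter, dvd_floor_iff _ _ hd] at hy
      refine ⟨⌊g y⌋, Int.fract_nonneg _, ?_⟩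
      have := hy.2
      rw [Int.fract] at this
      simp only [hg]
      linarith)
  have hl := fejer_B g N B (by omega) (1 / d) (1 - 1 / d) (by linarith) hW
    ((range N).filter fun y : ℕ => ¬ (d : ℤ) ∣ ⌊P.eval ((d : ℝ) * y)⌋) (filter_subset _ _) (by
      intro y hy
      rw [mem_filter, dvd_floor_iff _ _ hd] at hy
      have h1 := hy.2
      have h2 := Int.fract_lt_one (P.eval ((d : ℝ) * y) / d)
      rw [Int.fract] at h1 h2
      refine ⟨⌊g y⌋, ?_, ?_⟩
      · simp only [hg]; linarith
      · simp only [hg]; linarith)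
  have hs := card_filter_add_card_filter_not (s := range N) (fun y : ℕ => (d : ℤ) ∣ ⌊P.eval ((d : ℝ) * y)⌋)
  rw [card_range] at hs
  have hs' : (((range N).filter fun y : ℕ => (d : ℤ) ∣ ⌊P.eval ((d : ℝ) * y)⌋).card : ℝ) +
    (((range N).filter fun y : ℕ => ¬ (d : ℤ) ∣ ⌊P.eval ((d : ℝ) * y)⌋).card : ℝ) = N := by exact_mod_cast hs
  have e1 : (N : ℝ) * (1 / d + 5 / B) = N / d + 5 * N / B := by ring
  have e2 : (N : ℝ) * (1 - 1 / d + 5 / B) = N - N / d + 5 * N / B := by ring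
  rw [e1] at hu
  rw [e2] at hl
  rw [abs_le]
  constructor <;> linarith

end WeylAux

namespace WeylAux

/-- `∑ μ(d)/d² = 6/π²`. -/
lemma hasSum_moebius :
    HasSum (fun d : ℕ => (ArithmeticFunction.moebius d : ℝ) / (d : ℝ) ^ 2) (1 / (π ^ 2 / 6)) := by
  have hs : 1 < (2 : ℂ).re := by norm_num
  have h1 := ArithmeticFunction.LSeries_zeta_mul_Lseries_moebius hs
  rw [ArithmeticFunction.LSeries_zeta_eq_riemannZeta hs, riemannZeta_two] at h1
  have h2 := (ArithmeticFunction.LSeriesSummable_moebius_iff.mpr hs).LSeriesHasSum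
  rw [LSeriesHasSum] at h2
  have h3 : LSeries (fun n => (ArithmeticFunction.moebius n : ℂ)) 2 = ((1 / (π ^ 2 / 6) : ℝ) : ℂ) := by
    have : ((π : ℂ) ^ 2 / 6) ≠ 0 := by
      have := Real.pi_ne_zero
      have : (π : ℂ) ≠ 0 := by exact_mod_cast this
      exact div_ne_zero (pow_ne_zero 2 this) (by norm_num)
    push_cast
    rw [eq_div_iff this, mul_comm]
    exact h1
  rw [h3] at h2
  rw [← Complex.hasSum_ofReal]
  convert h2 using 1
  funext d
  rw [LSeries.term_def₀ (by simp)]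
  push_cast
  rw [div_eq_mul_inv]
  congr 1
  rw [Complex.cpow_neg]
  norm_cast

lemma sqfree_dvd_primorial (d w : ℕ) (hd : Squarefree d) (hdw : d ≤ w) : d ∣ primorial w := by
  rw [← Nat.prod_primeFactors_of_squarefree hd, primorial]
  apply Finset.prod_dvd_prod_of_subset
  intro p hp
  rw [mem_filter, mem_range]
  have h1 := Nat.prime_of_mem_primeFactors hp
  have h2 := Nat.le_of_mem_primeFactors hp
  exact ⟨by omega, h1⟩

lemma main_term (w : ℕ) (hw : 1 ≤ w) :
    |(∑ d ∈ (primorial w).divisors, (ArithmeticFunction.moebius d : ℝ) / (d : ℝ) ^ 2) - 1 / (π ^ 2 / 6)|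
      ≤ 2 / (w : ℝ) := by
  have ht := hasSum_moebius.tendsto_sum_nat
  set D := (primorial w).divisors with hD
  set f : ℕ → ℝ := fun d : ℕ => (ArithmeticFunction.moebius d : ℝ) / (d : ℝ) ^ 2 with hf
  have ht2 := (ht.const_sub (∑ d ∈ D, f d)).abs
  refine le_of_tendsto ht2 ?_
  filter_upwards [Filter.eventually_ge_atTop (primorial w + 1)] with M hM
  have hsub : D ⊆ range M := by
    intro d hd
    have := Nat.divisor_le hd
    rw [mem_range]; omega
  rw [← sum_sdiff hsub, abs_sub_comm, add_sub_cancel_right]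
  have h1 : |∑ d ∈ range M \ D, f d| ≤ ∑ d ∈ range M \ D, (if w < d then ((d : ℝ) ^ 2)⁻¹ else 0) := by
    refine (abs_sum_le_sum_abs _ _).trans (sum_le_sum fun d hd => ?_)
    rw [mem_sdiff] at hd
    have hfb : |f d| ≤ ((d : ℝ) ^ 2)⁻¹ := by
      simp only [hf]
      rw [abs_div, div_eq_mul_inv, abs_of_nonneg (by positivity : (0 : ℝ) ≤ (d : ℝ) ^ 2)]
      have : |(ArithmeticFunction.moebius d : ℝ)| ≤ 1 := by
        exact_mod_cast (ArithmeticFunction.abs_moebius_le_one (n := d))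
      exact mul_le_of_le_one_left (by positivity) this
    split_ifs with hwd
    · exact hfb
    · have : ArithmeticFunction.moebius d = 0 := by
        apply ArithmeticFunction.moebius_eq_zero_of_not_squarefree
        intro hsq
        apply hd.2
        rw [hD, Nat.mem_divisors]
        exact ⟨sqfree_dvd_primorial d w hsq (by omega), primorial_ne_zero w⟩
      simp [hf, this]
  refine h1.trans ?_
  rw [← sum_filter]
  have h2 : ∑ d ∈ (range M \ D).filter (fun d => w < d), ((d : ℝ) ^ 2)⁻¹ ≤ ∑ d ∈ Ioo w M, ((d : ℝ) ^ 2)⁻¹ := by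
    apply sum_le_sum_of_subset_of_nonneg
    · intro d hd
      rw [mem_filter, mem_sdiff, mem_range] at hd
      rw [mem_Ioo]
      exact ⟨hd.2, hd.1.1⟩
    · intros; positivity
  refine h2.trans ((sum_Ioo_inv_sq_le w M).trans ?_)
  have : (1 : ℝ) ≤ w := by exact_mod_cast hw
  gcongr
  linarith

/-- the gcd -/
noncomputable def GG (P : Polynomial ℝ) (x : ℕ) : ℕ := Int.gcd (x : ℤ) ⌊P.eval (x : ℝ)⌋

lemma AP_eq (P : Polynomial ℝ) (d : ℕ) (X : ℝ) :
    AP P d X = (Icc 1 ⌊X⌋₊).filter fun x => d ∣ GG P x := by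
  ext x
  simp only [AP, mem_filter, GG, Int.dvd_gcd_iff]

lemma moebius_ind (n : ℕ) (_hn : n ≠ 0) :
    ∑ d ∈ n.divisors, ArithmeticFunction.moebius d = if n = 1 then 1 else 0 := by
  rw [← ArithmeticFunction.coe_mul_zeta_apply, ArithmeticFunction.moebius_mul_coe_zeta,
    ArithmeticFunction.one_apply]

lemma legendre (P : Polynomial ℝ) (X : ℝ) (W : ℕ) (hW : W ≠ 0) :
    (((Icc 1 ⌊X⌋₊).filter fun x => Nat.gcd (GG P x) W = 1).card : ℝ) =
      ∑ d ∈ W.divisors, (ArithmeticFunction.moebius d : ℝ) * (AP P d X).card := by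
  have h1 : (((Icc 1 ⌊X⌋₊).filter fun x => Nat.gcd (GG P x) W = 1).card : ℤ) =
      ∑ d ∈ W.divisors, ArithmeticFunction.moebius d * ((AP P d X).card : ℤ) := by
    rw [card_filter]
    push_cast
    have : ∀ x ∈ Icc 1 ⌊X⌋₊, (if Nat.gcd (GG P x) W = 1 then (1 : ℤ) else 0) =
        ∑ d ∈ W.divisors, if d ∣ GG P x then ArithmeticFunction.moebius d else 0 := by
      intro x _
      rw [← moebius_ind _ (Nat.gcd_ne_zero_right hW), ← sum_filter]
      apply sum_congr _ (fun _ _ => rfl)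
      ext d
      simp only [Nat.mem_divisors, mem_filter, Nat.dvd_gcd_iff]
      have := Nat.gcd_ne_zero_right (m := GG P x) hW
      tauto
    rw [sum_congr rfl this, sum_comm]
    apply sum_congr rfl
    intro d _
    rw [AP_eq, card_filter]
    push_cast
    rw [mul_sum]
    apply sum_congr rfl
    intro x _
    split_ifs <;> simp
  exact_mod_cast h1

lemma coprime_Pz (g : ℕ) (z : ℝ) : Nat.gcd g (Pz z) = 1 ↔ ∀ p : ℕ, p.Prime → (p : ℝ) < z → ¬ p ∣ g := by
  change Nat.Coprime g (Pz z) ↔ _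
  rw [Pz, Nat.coprime_prod_right_iff]
  constructor
  · intro h p hp hpz hpg
    have := h p (by
      rw [primesLt, mem_filter, mem_range]
      exact ⟨Nat.lt_ceil.2 hpz, hp, hpz⟩)
    rw [Nat.coprime_comm, hp.coprime_iff_not_dvd] at this
    exact this hpg
  · intro h p hp
    rw [primesLt, mem_filter] at hp
    rw [Nat.coprime_comm, hp.2.1.coprime_iff_not_dvd]
    exact h p hp.2.1 hp.2.2

lemma coprime_primorial (g w : ℕ) : Nat.gcd g (primorial w) = 1 ↔ ∀ p : ℕ, p.Prime → p ≤ w → ¬ p ∣ g := by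
  change Nat.Coprime g (primorial w) ↔ _
  rw [primorial, Nat.coprime_prod_right_iff]
  constructor
  · intro h p hp hpz hpg
    have := h p (by
      rw [mem_filter, mem_range]
      exact ⟨by omega, hp⟩)
    rw [Nat.coprime_comm, hp.coprime_iff_not_dvd] at this
    exact this hpg
  · intro h p hp
    rw [mem_filter, mem_range] at hp
    rw [Nat.coprime_comm, hp.2.coprime_iff_not_dvd]
    exact h p hp.2 (by omega)

lemma sieve (P : Polynomial ℝ) (X z E : ℝ) (w : ℕ) (hX : 0 ≤ X) (hw : 1 ≤ w) (hz : (4 : ℝ) ^ w ≤ z)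
    (hE : 0 ≤ E) (hA : ∀ d : ℕ, 1 ≤ d → (d : ℝ) ≤ z → |((AP P d X).card : ℝ) - X / (d : ℝ) ^ 2| ≤ E) :
    |(S2 P X z : ℝ) - X / (π ^ 2 / 6)| ≤ 4 * X / w + 3 * z * E := by
  have hw0 : (1 : ℝ) ≤ w := by exact_mod_cast hw
  have hwz : (w : ℝ) < z := by
    have : w < 4 ^ w := Nat.lt_pow_self (by norm_num)
    have : (w : ℝ) < (4 : ℝ) ^ w := by exact_mod_cast this
    linarith
  have hz1 : 1 ≤ z := by linarith
  set W := primorial w with hW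
  have hWz : (W : ℝ) ≤ z := by
    have := primorial_le_four_pow w
    have : (W : ℝ) ≤ (4 : ℝ) ^ w := by exact_mod_cast this
    linarith
  set SW := (Icc 1 ⌊X⌋₊).filter fun x => Nat.gcd (GG P x) W = 1 with hSW
  set SZ := (Icc 1 ⌊X⌋₊).filter fun x => Nat.gcd (GG P x) (Pz z) = 1 with hSZ
  have hS2 : S2 P X z = SZ.card := by
    rw [← card_image_of_injective SZ (Nat.cast_injective (R := ℤ)), S2]
    refine congrArg card ?_
    ext x
    simp only [hSZ, mem_filter, mem_image, GG, Finset.bind_def, Finset.pure_def, Finset.mem_sup, mem_singleton]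
    constructor
    · rintro ⟨⟨v, hv, rfl⟩, h⟩
      exact ⟨v, mem_filter.2 ⟨hv, by simpa using h⟩, rfl⟩
    · rintro ⟨v, hvh, rfl⟩
      obtain ⟨hv, h⟩ := mem_filter.1 hvh
      exact ⟨⟨v, hv, rfl⟩, by simpa using h⟩
  set R := (primesLt z).filter fun p => w < p with hR
  have hsub1 : SZ ⊆ SW := by
    intro x hx
    rw [hSZ, mem_filter, coprime_Pz] at hx
    rw [hSW, mem_filter, hW, coprime_primorial]
    refine ⟨hx.1, fun p hp hpw => hx.2 p hp ?_⟩
    have : (p : ℝ) ≤ w := by exact_mod_cast hpw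
    linarith
  have hsub2 : SW ⊆ SZ ∪ R.biUnion fun p => AP P p X := by
    intro x hx
    rw [hSW, mem_filter, hW, coprime_primorial] at hx
    rw [mem_union]
    by_cases hxz : x ∈ SZ
    · exact Or.inl hxz
    · right
      rw [hSZ, mem_filter, coprime_Pz] at hxz
      have : ¬ ∀ p : ℕ, p.Prime → (p : ℝ) < z → ¬ p ∣ GG P x := fun h => hxz ⟨hx.1, h⟩
      push Not at this
      obtain ⟨p, hp, hpz, hpg⟩ := this
      rw [mem_biUnion]
      refine ⟨p, ?_, ?_⟩
      · rw [hR, mem_filter, primesLt, mem_filter, mem_range]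
        refine ⟨⟨Nat.lt_ceil.2 hpz, hp, hpz⟩, ?_⟩
        by_contra hpw
        exact hx.2 p hp (by omega) hpg
      · rw [AP_eq, mem_filter]
        exact ⟨hx.1, hpg⟩
  have hc1 : (SZ.card : ℝ) ≤ SW.card := by exact_mod_cast card_le_card hsub1
  have hc2 : (SW.card : ℝ) ≤ SZ.card + ∑ p ∈ R, ((AP P p X).card : ℝ) := by
    have := (card_le_card hsub2).trans ((card_union_le _ _).trans
      (Nat.add_le_add_left card_biUnion_le _))
    exact_mod_cast this
  have hR1 : ∀ p ∈ R, ((AP P p X).card : ℝ) ≤ X * ((p : ℝ) ^ 2)⁻¹ + E := by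
    intro p hp
    rw [hR, mem_filter, primesLt, mem_filter] at hp
    have := (abs_le.1 (hA p hp.1.2.1.one_lt.le hp.1.2.2.le)).2
    rw [div_eq_mul_inv] at this
    linarith
  have hRcard : (R.card : ℝ) ≤ 2 * z := by
    have h1 : R.card ≤ ⌈z⌉₊ := by
      have := card_le_card ((filter_subset (fun p => w < p) (primesLt z)).trans
        (filter_subset _ (range ⌈z⌉₊)))
      rwa [card_range] at this
    have h2 : (R.card : ℝ) ≤ ⌈z⌉₊ := by exact_mod_cast h1
    have := Nat.ceil_lt_add_one (a := z) (by linarith)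
    linarith
  have hRsq : ∑ p ∈ R, ((p : ℝ) ^ 2)⁻¹ ≤ 2 / w := by
    have h1 : ∑ p ∈ R, ((p : ℝ) ^ 2)⁻¹ ≤ ∑ p ∈ Ioo w ⌈z⌉₊, ((p : ℝ) ^ 2)⁻¹ := by
      apply sum_le_sum_of_subset_of_nonneg
      · intro p hp
        rw [hR, mem_filter, primesLt, mem_filter, mem_range] at hp
        rw [mem_Ioo]
        exact ⟨hp.2, hp.1.1⟩
      · intros; positivity
    refine h1.trans ((sum_Ioo_inv_sq_le w _).trans ?_)
    gcongr
    linarith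
  have hRsum : ∑ p ∈ R, ((AP P p X).card : ℝ) ≤ X * (2 / w) + 2 * z * E := by
    refine (sum_le_sum hR1).trans ?_
    rw [sum_add_distrib, ← mul_sum, sum_const, nsmul_eq_mul]
    gcongr
  have hleg := legendre P X W (primorial_ne_zero w)
  rw [← hSW] at hleg
  have hmt := main_term w hw
  rw [← hW] at hmt
  have hdiff : |(SW.card : ℝ) - X * ∑ d ∈ W.divisors, (ArithmeticFunction.moebius d : ℝ) / (d : ℝ) ^ 2|
      ≤ z * E := by
    rw [hleg, mul_sum, ← sum_sub_distrib]
    refine (abs_sum_le_sum_abs _ _).trans ?_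
    have : ∀ d ∈ W.divisors, |(ArithmeticFunction.moebius d : ℝ) * (AP P d X).card -
        X * ((ArithmeticFunction.moebius d : ℝ) / (d : ℝ) ^ 2)| ≤ E := by
      intro d hd
      have e : (ArithmeticFunction.moebius d : ℝ) * (AP P d X).card -
        X * ((ArithmeticFunction.moebius d : ℝ) / (d : ℝ) ^ 2) =
        (ArithmeticFunction.moebius d : ℝ) * ((AP P d X).card - X / (d : ℝ) ^ 2) := by ring
      rw [e, abs_mul]
      have h1 : |(ArithmeticFunction.moebius d : ℝ)| ≤ 1 := by
        exact_mod_cast (ArithmeticFunction.abs_moebius_le_one (n := d))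
      have h2 : (d : ℝ) ≤ W := by exact_mod_cast Nat.divisor_le hd
      exact (mul_le_of_le_one_left (abs_nonneg _) h1).trans
        (hA d (Nat.pos_of_mem_divisors hd) (h2.trans hWz))
    refine (sum_le_sum this).trans ?_
    rw [sum_const, nsmul_eq_mul]
    have h3 : (W.divisors.card : ℝ) ≤ W := by exact_mod_cast Nat.card_divisors_le_self W
    gcongr
    linarith
  rw [hS2]
  set m := ∑ d ∈ W.divisors, (ArithmeticFunction.moebius d : ℝ) / (d : ℝ) ^ 2 with hm
  have hmt2 : |X * m - X / (π ^ 2 / 6)| ≤ X * (2 / w) := by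
    have e : X * m - X / (π ^ 2 / 6) = X * (m - 1 / (π ^ 2 / 6)) := by ring
    rw [e, abs_mul, abs_of_nonneg hX]
    gcongr
  have e4 : 4 * X / w = X * (2 / w) + X * (2 / w) := by ring
  have hz0 : 0 ≤ z * E := by positivity
  have hx0 : 0 ≤ X * (2 / w) := by positivity
  rw [abs_le] at hdiff hmt2 ⊢
  rw [e4]
  constructor <;> linarith [hdiff.1, hdiff.2, hmt2.1, hmt2.2]

end WeylAux

namespace WeylAux

open Classical in
lemma AP_card (P : Polynomial ℝ) (d : ℕ) (hd : 1 ≤ d) (X : ℝ) :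
    (AP P d X).card ≤ ((range (⌊X⌋₊ / d + 1)).filter
      fun y : ℕ => (d : ℤ) ∣ ⌊P.eval ((d : ℝ) * y)⌋).card ∧
    ((range (⌊X⌋₊ / d + 1)).filter
      fun y : ℕ => (d : ℤ) ∣ ⌊P.eval ((d : ℝ) * y)⌋).card ≤ (AP P d X).card + 1 := by
  set F := (range (⌊X⌋₊ / d + 1)).filter fun y : ℕ => (d : ℤ) ∣ ⌊P.eval ((d : ℝ) * y)⌋ with hF
  constructor
  · have hs : AP P d X ⊆ F.image (fun y => d * y) := by
      intro x hx
      rw [AP, mem_filter, mem_Icc] at hx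
      obtain ⟨⟨_, hx2⟩, hdx, hfl⟩ := hx
      obtain ⟨y, rfl⟩ := Int.natCast_dvd_natCast.1 hdx
      rw [mem_image]
      refine ⟨y, ?_, rfl⟩
      rw [hF, mem_filter, mem_range]
      refine ⟨?_, by simpa using hfl⟩
      have : y ≤ ⌊X⌋₊ / d := by
        rw [Nat.le_div_iff_mul_le hd, mul_comm]; exact hx2
      omega
    exact (card_le_card hs).trans card_image_le
  · have hs : F ⊆ insert 0 ((AP P d X).image fun x => x / d) := by
      intro y hy
      rw [hF, mem_filter, mem_range] at hy
      rw [mem_insert, mem_image]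
      by_cases hy0 : y = 0
      · exact Or.inl hy0
      · right
        refine ⟨d * y, ?_, Nat.mul_div_cancel_left y hd⟩
        rw [AP, mem_filter, mem_Icc]
        refine ⟨⟨Nat.mul_pos hd (Nat.pos_of_ne_zero hy0), ?_⟩, ?_, ?_⟩
        · have : y ≤ ⌊X⌋₊ / d := by omega
          rw [Nat.le_div_iff_mul_le hd, mul_comm] at this
          exact this
        · push_cast; exact Dvd.intro _ rfl
        · simpa using hy.2
    refine (card_le_card hs).trans ((card_insert_le _ _).trans ?_)
    exact Nat.add_le_add_right card_image_le 1

lemma level (P : Polynomial ℝ) (hP : ¬ IsLiouvilleNumber (P.coeff 1)) :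
    ∃ K : ℕ, 2 ≤ K ∧ ∀ X z : ℝ, 2 ≤ z → z ^ K ≤ X → ∀ d : ℕ, 1 ≤ d → (d : ℝ) ≤ z →
      |((AP P d X).card : ℝ) - X / (d : ℝ) ^ 2| ≤ 12 * X / z ^ 2 := by
  obtain ⟨C2, hC⟩ := equi P hP
  refine ⟨3 * C2 + 2, by omega, fun X z hz hzX d hd hdz => ?_⟩
  set B := ⌈z ^ 2⌉₊ with hB
  have hB1 : z ^ 2 ≤ B := Nat.le_ceil _
  have hB2 : (B : ℝ) ≤ z ^ 3 := by
    have := Nat.ceil_lt_add_one (a := z ^ 2) (by positivity)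
    nlinarith
  have hB3 : 2 ≤ B := by
    have : (2 : ℝ) ≤ B := by nlinarith
    exact_mod_cast this
  have hz0 : 0 < z := by linarith
  have hzX2 : z ^ 2 ≤ X := le_trans (pow_le_pow_right₀ (by linarith) (by omega)) hzX
  have hX1 : 1 ≤ X := by nlinarith
  have hd0 : (1 : ℝ) ≤ d := by exact_mod_cast hd
  set N := ⌊X⌋₊ / d + 1 with hN
  have hfl : ⌊X⌋₊ / d = ⌊X / d⌋₊ := (Nat.floor_div_natCast X d).symm
  have hN1 : X / d < N := by
    rw [hN, hfl]; push_cast; exact Nat.lt_floor_add_one _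
  have hN2 : (N : ℝ) ≤ X / d + 1 := by
    rw [hN, hfl]; push_cast
    have := Nat.floor_le (a := X / d) (by positivity)
    linarith
  have hXd : X / d ≤ X := div_le_self (by linarith) hd0
  have hBN : B ^ C2 ≤ N := by
    have h1 : (B : ℝ) ^ C2 ≤ X / d := by
      rw [le_div_iff₀ (by linarith)]
      calc (B : ℝ) ^ C2 * d ≤ (z ^ 3) ^ C2 * z := by gcongr
        _ = z ^ (3 * C2 + 1) := by ring
        _ ≤ z ^ (3 * C2 + 2) := pow_le_pow_right₀ (by linarith) (by omega)
        _ ≤ X := hzX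
    have : ((B ^ C2 : ℕ) : ℝ) ≤ N := by push_cast; linarith
    exact_mod_cast this
  have hE := hC B d N hB3 hd hBN
  obtain ⟨hc1, hc2⟩ := AP_card P d hd X
  rw [← hN] at hc1 hc2
  have hc1' : ((AP P d X).card : ℝ) ≤ _ := Nat.cast_le.2 hc1
  have hc2' := Nat.cast_le (α := ℝ).2 hc2
  push_cast at hc2'
  have hNd : |(N : ℝ) / d - X / (d : ℝ) ^ 2| ≤ 1 := by
    have e : (N : ℝ) / d - X / (d : ℝ) ^ 2 = (N - X / d) / d := by field_simp
    rw [e, abs_div, Nat.abs_cast, abs_of_pos (by linarith)]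
    rw [div_le_one (by linarith)]
    linarith
  have hEb : 5 * (N : ℝ) / B ≤ 10 * X / z ^ 2 := by
    have : 5 * (N : ℝ) ≤ 10 * X := by linarith
    gcongr
  have h2 : 2 ≤ 2 * X / z ^ 2 := by
    rw [le_div_iff₀ (by positivity)]; linarith
  have e12 : 12 * X / z ^ 2 = 10 * X / z ^ 2 + 2 * X / z ^ 2 := by ring
  rw [e12]
  rw [abs_le] at hE hNd ⊢
  constructor <;> linarith [hE.1, hE.2, hNd.1, hNd.2]

lemma ev_T (c : ℝ) (hc : 0 < c) (K : ℕ) : ∃ T : ℝ, ∀ t : ℝ, T ≤ t →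
    2 ≤ t ∧ (K : ℝ) * c ≤ t ∧ 2 * t ^ 2 ≤ c * Real.exp t := by
  have h1 := (tendsto_pow_mul_exp_neg_atTop_nhds_zero 2).eventually_le_const (show (0 : ℝ) < c / 2 by positivity)
  have h2 := (Filter.eventually_ge_atTop (2 : ℝ)).and ((Filter.eventually_ge_atTop ((K : ℝ) * c)).and h1)
  obtain ⟨T, hT⟩ := Filter.eventually_atTop.1 h2
  refine ⟨T, fun t ht => ?_⟩
  obtain ⟨a, b, e⟩ := hT t ht
  refine ⟨a, b, ?_⟩
  rw [Real.exp_neg, ← div_eq_mul_inv, div_le_iff₀ (Real.exp_pos t)] at e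
  linarith

theorem main (P : Polynomial ℝ) (hP : ¬ IsLiouvilleNumber (P.coeff 1))
    (ε A : ℝ) (_hε : ε ∈ Set.Ioo (0 : ℝ) 1) (hA : 0 < A) :
    ∃ μ : ℝ, μ ∈ Set.Ioo (0 : ℝ) 1 ∧ ∃ C₁ > (0 : ℝ), ∃ X₂ : ℝ, ∀ X : ℝ, X ≥ X₂ →
      |(S2 P X (zf A X) : ℝ) - X / (π ^ 2 / 6)|
        ≤ C₁ * (X / (Real.log (zf A X)) ^ (ε * μ)
            + X / (Real.log (Real.log X)) ^ ((1 : ℝ) / 3)) := by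
  obtain ⟨K, _, hK⟩ := level P hP
  set c : ℝ := 1 / (2 * (A + 1)) with hc
  have hc0 : 0 < c := by positivity
  obtain ⟨T, hT⟩ := ev_T c hc0 K
  refine ⟨1 / 2, by norm_num, 80, by norm_num, Real.exp (Real.exp T), fun X hX => ?_⟩
  have hX0 : 0 < X := lt_of_lt_of_le (Real.exp_pos _) hX
  have hlX : Real.exp T ≤ Real.log X := (Real.le_log_iff_exp_le hX0).2 hX
  have hl0 : 0 < Real.log X := lt_of_lt_of_le (Real.exp_pos _) hlX
  have hLT : T ≤ Real.log (Real.log X) := (Real.le_log_iff_exp_le hl0).2 hlX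
  obtain ⟨h2, hKc, hbig⟩ := hT _ hLT
  rw [Real.exp_log hl0] at hbig
  set L := Real.log (Real.log X) with hL
  have hL0 : 0 < L := by linarith
  set z := zf A X with hz
  have hzexp : z = Real.exp (Real.log X * (c / L)) := by
    rw [hz, zf, Real.rpow_def_of_pos hX0]
  have hlogz : Real.log z = Real.log X * (c / L) := by rw [hzexp, Real.log_exp]
  set w := ⌊L⌋₊ with hw
  have hwL : (w : ℝ) ≤ L := Nat.floor_le hL0.le
  have hwL2 : L < w + 1 := Nat.lt_floor_add_one L
  have hw1 : 1 ≤ w := Nat.le_floor (by push_cast; linarith)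
  have hw0 : (1 : ℝ) ≤ w := by exact_mod_cast hw1
  have h4 : (4 : ℝ) ^ w ≤ z := by
    have h4e : (4 : ℝ) ≤ Real.exp 2 := by
      have := Real.exp_one_gt_d9
      have e : Real.exp 2 = Real.exp 1 * Real.exp 1 := by rw [← Real.exp_add]; norm_num
      rw [e]; nlinarith
    calc (4 : ℝ) ^ w ≤ (Real.exp 2) ^ w := by gcongr
      _ = Real.exp (w * 2) := by rw [Real.exp_nat_mul]
      _ ≤ z := by
        rw [hzexp, Real.exp_le_exp]
        have : L * 2 ≤ Real.log X * (c / L) := by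
          rw [← mul_div_assoc, le_div_iff₀ hL0]; nlinarith
        linarith
  have hz2 : 2 ≤ z := by
    have : (4 : ℝ) ^ 1 ≤ (4 : ℝ) ^ w := pow_le_pow_right₀ (by norm_num) hw1
    linarith
  have hzK : z ^ K ≤ X := by
    rw [hzexp, ← Real.exp_nat_mul]
    conv_rhs => rw [← Real.exp_log hX0]
    rw [Real.exp_le_exp]
    have : (K : ℝ) * (Real.log X * (c / L)) = Real.log X * (K * c / L) := by ring
    rw [this]
    exact mul_le_of_le_one_right hl0.le ((div_le_one hL0).2 hKc)
  have hs := sieve P X z (12 * X / z ^ 2) w hX0.le hw1 h4 (by positivity) (hK X z hz2 hzK)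
  have hwz : (w : ℝ) ≤ z := by
    have : w < 4 ^ w := Nat.lt_pow_self (by norm_num)
    have : (w : ℝ) < (4 : ℝ) ^ w := by exact_mod_cast this
    linarith
  have e1 : 3 * z * (12 * X / z ^ 2) = 36 * X / z := by field_simp; ring
  have e2 : 36 * X / z ≤ 36 * X / w := by gcongr
  have e3 : 4 * X / w + 36 * X / w = 40 * X / w := by ring
  have e4 : 40 * X / w ≤ 80 * (X / L) := by
    have : 80 * (X / L) = 40 * X / (L / 2) := by field_simp; ring
    rw [this]
    gcongr
    linarith
  have e5 : X / L ≤ X / L ^ ((1 : ℝ) / 3) := by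
    gcongr
    calc L ^ ((1 : ℝ) / 3) ≤ L ^ (1 : ℝ) :=
          Real.rpow_le_rpow_of_exponent_le (by linarith) (by norm_num)
      _ = L := Real.rpow_one L
  have e6 : 0 ≤ X / (Real.log z) ^ (ε * (1 / 2)) := by
    apply div_nonneg hX0.le
    apply Real.rpow_nonneg
    exact Real.log_nonneg (by linarith)
  rw [e1] at hs
  linarith

end WeylAux

/-- With `c = 1/(2(A+1))` and `z = X^(c/log log X)`: there are `μ ∈ (0,1)` and `C₁ > 0`
such that for all sufficiently large `X`,
`|S(X,z) - X/ζ(2)| ≤ C₁·(X/(log z)^(εμ) + X/(log log X)^(1/3))`, where `ζ(2) = π²/6`. -/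
theorem statement11 (P : Polynomial ℝ) (hP : ¬ IsLiouvilleNumber (P.coeff 1))
    (ε A : ℝ) (hε : ε ∈ Set.Ioo (0 : ℝ) 1) (hA : 0 < A) :
    ∃ μ : ℝ, μ ∈ Set.Ioo (0 : ℝ) 1 ∧ ∃ C₁ > (0 : ℝ), ∃ X₂ : ℝ, ∀ X : ℝ, X ≥ X₂ →
      |(S2 P X (zf A X) : ℝ) - X / (π ^ 2 / 6)|
        ≤ C₁ * (X / (Real.log (zf A X)) ^ (ε * μ)
            + X / (Real.log (Real.log X)) ^ ((1 : ℝ) / 3)) := by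
  exact WeylAux.main P hP ε A hε hA
end
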